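/- Let b ≥ 0 and w be integers with 3^{b+1} ∣ w, and let z₁, z₂, z₃ be nonzero integers with gcd(z₁, z₂, z₃) = 1 satisfying z₁³ + z₂³ + 9z₃³ = 0 and wz₁ + 3^b z₂ + z₃ = 0. Then max(|z₂|, 3|z₃|) < 3^{37.5·b + 30} (an inequality of real numbers, where the right-hand side is the real power 3^{37.5b+30}). -/

import Mathlib

/-!
Substituting the linear equation into the cubic one gives `z₁ ∣ 3 ^ (3 * b + 2) - 1`, hence
`|z₂ ^ 3 + 9 * z₃ ^ 3| = |z₁| ^ 3 < 3 ^ (9 * b + 6)`. If `|z₃|` is large, then `-z₂ / z₃` is so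
close to `∛9` that it contradicts an effective irrationality measure in the style of Bennett.

* For huge `|z₃|` the measure comes from the Padé approximants to `(1 + 1 / 8) ^ (1 / 3) = ∛9 / 2`.
* Below the range of the Padé approximants, `|z₃|` lies in one of twelve windows, and in each of
  them a single convergent of `∛9` gives the contradiction.
* Both steps need `b` to be at most logarithmic in `log |z₃|`. Since `3 ^ b ∣ z₃`, a 3-descent in
  the Eisenstein integers on `x ^ 3 + y ^ 3 = 9 * z ^ 3` gives `|z₃| ≥ 13 ^ ((6 ^ b - 1) / 5)`.
-/

open Finset Polynomial

/-! ### Padé approximants to `x ↦ x ^ ν` -/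

section Pade

variable {ν α s : ℝ} {n i k : ℕ}

/-- Coefficients of the diagonal Padé approximants to `(1 + 1 / α) ^ ν`, in the normalisation of
`neg_one_pow_mul_rpow_mul_padeSum_sub`. -/
noncomputable def padeCoeff (ν : ℝ) (n i : ℕ) : ℝ :=
  (n + i).choose n * (∏ l ∈ Ico (i + 1) (n + 1), (l + ν)) / (n - i).factorial

/-- The polynomial `∑ i ≤ n, padeCoeff ν n i * x ^ i`. Its values at `α` and `-(α + 1)` are the
numerator and, up to sign, the denominator of the Padé approximant. -/
noncomputable def padeSum (ν : ℝ) (n : ℕ) (x : ℝ) : ℝ :=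
  ∑ i ∈ range (n + 1), padeCoeff ν n i * x ^ i

/-- The factor in front of the integral in the Padé remainder. -/
noncomputable def padeWeight (ν : ℝ) (n : ℕ) : ℝ :=
  ν * ∏ k ∈ range n, (1 - ν ^ 2 / (k + 1) ^ 2)

/-- The function whose `n`-th power is integrated in the Padé remainder. -/
noncomputable def padeKernel (α s : ℝ) : ℝ :=
  (α + 1 - s) * (s - α) / s

/-- The Padé remainder, as a Beta-type integral. -/
noncomputable def padeRemainder (ν α : ℝ) (n : ℕ) : ℝ :=
  padeWeight ν n * ∫ s in α..α + 1, padeKernel α s ^ n * s ^ (ν - 1)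

/-- The `k`-fold antiderivative of `s ↦ s ^ (ν - n - 1)` without lower-order terms. -/
noncomputable def iteratedRpowIntegral (ν : ℝ) (n k : ℕ) (s : ℝ) : ℝ :=
  s ^ (ν - n - 1 + k) / ∏ l ∈ range k, (ν - n + l)

lemma sub_natCast_add_natCast_ne_zero (hν₀ : 0 < ν) (hν₁ : ν < 1) (n l : ℕ) :
    ν - n + l ≠ 0 := by
  intro h
  have hlt : (l : ℝ) < n := by linarith
  have hle : (l : ℝ) + 1 ≤ n := by exact_mod_cast hlt
  linarith

lemma prod_sub_natCast_add_ne_zero (hν₀ : 0 < ν) (hν₁ : ν < 1) (n k : ℕ) :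
    ∏ l ∈ range k, (ν - n + l) ≠ 0 :=
  prod_ne_zero_iff.2 fun l _ ↦ sub_natCast_add_natCast_ne_zero hν₀ hν₁ n l

lemma hasDerivAt_iteratedRpowIntegral (hν₀ : 0 < ν) (hν₁ : ν < 1) (hs : 0 < s) :
    HasDerivAt (iteratedRpowIntegral ν n (k + 1)) (iteratedRpowIntegral ν n k s) s := by
  have hderiv := (Real.hasDerivAt_rpow_const (p := ν - n - 1 + (k + 1 : ℕ))
    (Or.inl hs.ne')).div_const (∏ l ∈ range (k + 1), (ν - n + l))
  refine hderiv.congr_deriv ?_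
  have hfactor := sub_natCast_add_natCast_ne_zero hν₀ hν₁ n k
  have hprod := prod_sub_natCast_add_ne_zero hν₀ hν₁ n k
  rw [iteratedRpowIntegral, prod_range_succ,
    show ν - n - 1 + (k + 1 : ℕ) - 1 = ν - n - 1 + k by push_cast; ring,
    show ν - n - 1 + (k + 1 : ℕ) = ν - n + k by push_cast; ring]
  field_simp

lemma hasDerivAt_sum_iterate_derivative_mul_iteratedRpowIntegral (hν₀ : 0 < ν) (hν₁ : ν < 1)
    (hs : 0 < s) (p : ℝ[X]) (m : ℕ) :
    HasDerivAt (fun s ↦ ∑ k ∈ range m,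
        (-1) ^ k * ((derivative^[k] p).eval s * iteratedRpowIntegral ν n (k + 1) s))
      (p.eval s * iteratedRpowIntegral ν n 0 s
        - (-1) ^ m * ((derivative^[m] p).eval s * iteratedRpowIntegral ν n m s)) s := by
  induction m with
  | zero => simpa using hasDerivAt_const s (0 : ℝ)
  | succ m ih =>
    simp only [sum_range_succ]
    have hterm := (((derivative^[m] p).hasDerivAt s).mul
      (hasDerivAt_iteratedRpowIntegral (n := n) (k := m) hν₀ hν₁ hs)).const_mul ((-1 : ℝ) ^ m)
    refine (ih.add hterm).congr_deriv ?_
    rw [Function.iterate_succ_apply']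
    ring

-- Repeated integration by parts; the process stops because `p` is a polynomial.
lemma integral_eval_mul_iteratedRpowIntegral (hν₀ : 0 < ν) (hν₁ : ν < 1) (hα : 0 < α)
    {p : ℝ[X]} {m : ℕ} (hp : p.natDegree < m) :
    ∫ s in α..α + 1, p.eval s * iteratedRpowIntegral ν n 0 s =
      ∑ k ∈ range m, (-1) ^ k *
          ((derivative^[k] p).eval (α + 1) * iteratedRpowIntegral ν n (k + 1) (α + 1))
        - ∑ k ∈ range m, (-1) ^ k *
          ((derivative^[k] p).eval α * iteratedRpowIntegral ν n (k + 1) α) := by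
  have hpos : ∀ s ∈ Set.uIcc α (α + 1), 0 < s := fun s hs ↦ by
    rw [Set.uIcc_of_le (by linarith)] at hs
    exact hα.trans_le hs.1
  have hcont : ContinuousOn (fun s ↦ p.eval s * iteratedRpowIntegral ν n 0 s)
      (Set.uIcc α (α + 1)) :=
    p.continuous.continuousOn.mul <| .div_const
      (continuousOn_id.rpow_const fun s hs ↦ Or.inl (hpos s hs).ne') _
  refine intervalIntegral.integral_eq_sub_of_hasDerivAt
    (f := fun s ↦ ∑ k ∈ range m, (-1) ^ k *
      ((derivative^[k] p).eval s * iteratedRpowIntegral ν n (k + 1) s))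
    (fun s hs ↦ ?_) hcont.intervalIntegrable
  refine (hasDerivAt_sum_iterate_derivative_mul_iteratedRpowIntegral hν₀ hν₁ (hpos s hs) p m
    ).congr_deriv ?_
  rw [iterate_derivative_eq_zero hp]
  simp

/-- The polynomial `((α + 1 - s) (s - α)) ^ n` whose iterated integration by parts against
`s ^ (ν - n - 1)` produces the Padé approximants. -/
noncomputable def padeWeightPoly (α : ℝ) (n : ℕ) : ℝ[X] :=
  (C (α + 1) - X) ^ n * (X - C α) ^ n

lemma natDegree_padeWeightPoly_lt (α : ℝ) (n : ℕ) : (padeWeightPoly α n).natDegree < 2 * n + 1 := by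
  have hle : (padeWeightPoly α n).natDegree ≤ n * 1 + n * 1 := by
    refine natDegree_mul_le_of_le (natDegree_pow_le_of_le n ?_) (natDegree_pow_le_of_le n ?_)
    · exact (natDegree_sub_le _ _).trans (by simp)
    · exact natDegree_X_sub_C_le α
  lia

lemma taylor_padeWeightPoly_right (α : ℝ) (n : ℕ) :
    taylor (α + 1) (padeWeightPoly α n) = C ((-1) ^ n) * (X ^ n * (X + 1) ^ n) := by
  have hright : C (α + 1) - (X + C (α + 1)) = C (-1) * X := by simp
  have hleft : X + C (α + 1) - C α = X + 1 := by simp only [map_add, map_one]; ring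
  simp only [padeWeightPoly, taylor_apply, mul_comp, pow_comp, sub_comp, X_comp, C_comp, hright,
    hleft, mul_pow, ← C_pow]
  ring

lemma taylor_padeWeightPoly_left (α : ℝ) (n : ℕ) :
    taylor α (padeWeightPoly α n) = C ((-1) ^ n) * (X ^ n * (X + C (-1)) ^ n) := by
  have hright : C (α + 1) - (X + C α) = C (-1) * (X + C (-1)) := by
    simp only [map_add, map_neg, map_one]; ring
  have hleft : X + C α - C α = X := by ring
  simp only [padeWeightPoly, taylor_apply, mul_comp, pow_comp, sub_comp, X_comp, C_comp, hright,
    hleft, mul_pow, ← C_pow]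
  ring

lemma eval_iterate_derivative (p : ℝ[X]) (a : ℝ) (k : ℕ) :
    (derivative^[k] p).eval a = k.factorial * (taylor a p).coeff k := by
  rw [taylor_coeff, ← factorial_smul_hasseDeriv]
  simp [nsmul_eq_mul]

lemma sum_eval_iterate_derivative_of_taylor_eq {p q : ℝ[X]} {a c : ℝ}
    (htaylor : taylor a p = C c * (X ^ n * q)) (f : ℕ → ℝ) :
    ∑ k ∈ range (2 * n + 1), (-1) ^ k * ((derivative^[k] p).eval a * f k) =
      ∑ i ∈ range (n + 1), (-1) ^ (n + i) * ((n + i).factorial * (c * q.coeff i) * f (n + i)) := by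
  rw [show 2 * n + 1 = n + (n + 1) by ring, sum_range_add, sum_eq_zero, zero_add]
  · refine sum_congr rfl fun i _ ↦ ?_
    rw [eval_iterate_derivative, htaylor, coeff_C_mul, add_comm n i, coeff_X_pow_mul]
  · intro k hk
    rw [eval_iterate_derivative, htaylor, coeff_C_mul, coeff_X_pow_mul', if_neg (by simpa using hk)]
    ring

lemma prod_range_sub_natCast_add (ν : ℝ) (n : ℕ) :
    ∏ l ∈ range (2 * n + 1), (ν - n + l) = (-1) ^ n * n.factorial ^ 2 * padeWeight ν n := by
  induction n with
  | zero => simp [padeWeight]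
  | succ n ih =>
    have hshift : ∏ l ∈ range (2 * n + 1), (ν - (n + 1 : ℕ) + (l + 1 : ℕ)) =
        ∏ l ∈ range (2 * n + 1), (ν - n + l) :=
      prod_congr rfl fun l _ ↦ by push_cast; ring
    rw [show 2 * (n + 1) + 1 = 2 * n + 1 + 1 + 1 by ring, prod_range_succ, prod_range_succ', hshift,
      ih, padeWeight, padeWeight, prod_range_succ, Nat.factorial_succ]
    push_cast
    field_simp
    ring

lemma padeWeight_mul_iteratedRpowIntegral (hν₀ : 0 < ν) (hν₁ : ν < 1) (hi : i ≤ n) (hs : 0 < s) :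
    (-1) ^ n * padeWeight ν n *
        ((n + i).factorial * n.choose i * iteratedRpowIntegral ν n (n + i + 1) s) =
      s ^ ν * (padeCoeff ν n i * s ^ i) := by
  have hprod : (-1) ^ n * n.factorial ^ 2 * padeWeight ν n =
      (∏ l ∈ range (n + i + 1), (ν - n + l)) * ∏ l ∈ Ico (i + 1) (n + 1), (l + ν) := by
    rw [← prod_range_sub_natCast_add,
      ← prod_range_mul_prod_Ico _ (show n + i + 1 ≤ 2 * n + 1 by lia),
      show n + i + 1 = i + 1 + n by ring, show 2 * n + 1 = n + 1 + n by ring,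
      ← prod_Ico_add' (fun l : ℕ ↦ ν - n + l)]
    exact congrArg _ (prod_congr rfl fun l _ ↦ by push_cast; ring)
  have hrpow : s ^ (ν - n - 1 + (n + i + 1 : ℕ)) = s ^ ν * s ^ i := by
    rw [← Real.rpow_natCast s i, ← Real.rpow_add hs]
    congr 1
    push_cast
    ring
  have hne := prod_sub_natCast_add_ne_zero hν₀ hν₁ n (n + i + 1)
  have hchoose : ((n + i).choose n : ℝ) * n.factorial * i.factorial = (n + i).factorial := by
    rw [Nat.choose_symm_add]
    exact_mod_cast Nat.add_choose_mul_factorial_mul_factorial n i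
  have hchoose' : (n.choose i : ℝ) * i.factorial * (n - i).factorial = n.factorial := by
    exact_mod_cast Nat.choose_mul_factorial_mul_factorial hi
  rw [iteratedRpowIntegral, padeCoeff, hrpow]
  field_simp
  rw [← hchoose]
  linear_combination ((n + i).choose n : ℝ) * hprod +
    ((-1) ^ n * padeWeight ν n * (n + i).choose n * n.factorial : ℝ) * hchoose'

lemma eval_padeWeightPoly_mul_iteratedRpowIntegral_zero (ν α : ℝ) (n : ℕ) (hs : 0 < s) :
    (padeWeightPoly α n).eval s * iteratedRpowIntegral ν n 0 s =
      padeKernel α s ^ n * s ^ (ν - 1) := by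
  have hrpow : s ^ (ν - n - 1) = s ^ (ν - 1) / s ^ n := by
    rw [← Real.rpow_natCast s n, ← Real.rpow_sub hs]
    ring_nf
  simp only [padeWeightPoly, iteratedRpowIntegral, padeKernel, hrpow, eval_mul, eval_pow, eval_sub,
    eval_X, eval_C, range_zero, prod_empty, div_one, Nat.cast_zero, add_zero]
  rw [← mul_pow, div_pow]
  ring

theorem neg_one_pow_mul_rpow_mul_padeSum_sub (hν₀ : 0 < ν) (hν₁ : ν < 1) (hα : 0 < α) (n : ℕ) :
    (-1) ^ n * (α + 1) ^ ν * padeSum ν n (-(α + 1)) - α ^ ν * padeSum ν n α =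
      padeRemainder ν α n := by
  have hintegral : ∫ s in α..α + 1, padeKernel α s ^ n * s ^ (ν - 1) =
      ∫ s in α..α + 1, (padeWeightPoly α n).eval s * iteratedRpowIntegral ν n 0 s := by
    refine intervalIntegral.integral_congr fun s hs ↦ ?_
    rw [Set.uIcc_of_le (by linarith)] at hs
    exact (eval_padeWeightPoly_mul_iteratedRpowIntegral_zero ν α n (hα.trans_le hs.1)).symm
  rw [padeRemainder, hintegral, integral_eval_mul_iteratedRpowIntegral hν₀ hν₁ hα
    (natDegree_padeWeightPoly_lt α n), sum_eval_iterate_derivative_of_taylor_eq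
    (taylor_padeWeightPoly_right α n), sum_eval_iterate_derivative_of_taylor_eq
    (taylor_padeWeightPoly_left α n), padeSum, padeSum, mul_sub, mul_sum, mul_sum, mul_sum, mul_sum]
  congr 1 <;> refine sum_congr rfl fun i hi ↦ ?_
  · have hi' : i ≤ n := Nat.lt_succ_iff.1 (mem_range.1 hi)
    have hterm := padeWeight_mul_iteratedRpowIntegral hν₀ hν₁ hi' (add_pos hα one_pos)
    rw [coeff_X_add_one_pow, neg_pow (α + 1) i, pow_add]
    linear_combination (-(-1 : ℝ) ^ n * (-1) ^ i) * hterm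
  · have hi' : i ≤ n := Nat.lt_succ_iff.1 (mem_range.1 hi)
    have hterm := padeWeight_mul_iteratedRpowIntegral hν₀ hν₁ hi' hα
    obtain ⟨j, rfl⟩ := Nat.exists_eq_add_of_le hi'
    have hsign : (-1 : ℝ) ^ (i + j + i) * ((-1) ^ (i + j) * (-1) ^ j) = (-1) ^ (i + j) := by
      rw [← pow_add, ← pow_add, show i + j + i + (i + j + j) = i + j + 2 * (i + j) by ring, pow_add,
        pow_mul, neg_one_sq, one_pow, mul_one]
    rw [coeff_X_add_C_pow, Nat.add_sub_cancel_left, ← hterm]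
    linear_combination (-padeWeight ν (i + j) * ((i + j + i).factorial * (i + j).choose i *
      iteratedRpowIntegral ν (i + j) (i + j + i + 1) α)) * hsign

lemma padeWeight_pos (hν₀ : 0 < ν) (hν₁ : ν < 1) (n : ℕ) : 0 < padeWeight ν n := by
  refine mul_pos hν₀ (prod_pos fun k _ ↦ ?_)
  rw [sub_pos, ← div_pow]
  refine pow_lt_one₀ (by positivity) ((div_lt_one (by positivity)).2 ?_) two_ne_zero
  linarith [Nat.cast_nonneg (α := ℝ) k]

lemma padeWeight_antitone (hν₀ : 0 < ν) (hν₁ : ν < 1) : Antitone (padeWeight ν) := by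
  refine antitone_nat_of_succ_le fun n ↦ ?_
  have hpos := padeWeight_pos hν₀ hν₁ n
  rw [padeWeight, prod_range_succ, ← mul_assoc, ← padeWeight]
  exact mul_le_of_le_one_right hpos.le (sub_le_self _ (by positivity))

lemma padeWeight_le (hν₀ : 0 < ν) (hν₁ : ν < 1) (n : ℕ) : padeWeight ν n ≤ ν :=
  (padeWeight_antitone hν₀ hν₁ n.zero_le).trans_eq (by simp [padeWeight])

/-- The exponential growth rate `(√(α + 1) + √α) ^ 2` of the Padé approximants; the remainders
decay at the inverse rate. -/
noncomputable def padeRate (α : ℝ) : ℝ :=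
  (√(α + 1) + √α) ^ 2

lemma one_le_padeRate (hα : 0 ≤ α) : 1 ≤ padeRate α := by
  have hsqrt : 1 ≤ √(α + 1) := Real.one_le_sqrt.2 (by linarith)
  exact one_le_pow₀ (by linarith [Real.sqrt_nonneg α])

lemma padeRate_sub_one_sq (hα : 0 ≤ α) : (padeRate α - 1) ^ 2 = 4 * α * padeRate α := by
  have hsq := Real.sq_sqrt hα
  have hsq' := Real.sq_sqrt (show 0 ≤ α + 1 by linarith)
  have hsub : padeRate α - 1 = 2 * √α * (√(α + 1) + √α) := by
    rw [padeRate]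
    linear_combination hsq' - hsq
  rw [hsub, mul_pow, mul_pow, hsq, padeRate]
  ring

lemma padeKernel_le_inv_padeRate (hα : 0 < α) (hs : 0 < s) :
    padeKernel α s ≤ (padeRate α)⁻¹ := by
  have hsq := Real.sq_sqrt hα.le
  have hsq' := Real.sq_sqrt (show 0 ≤ α + 1 by linarith)
  have hinv : (padeRate α)⁻¹ = (√(α + 1) - √α) ^ 2 := by
    refine inv_eq_of_mul_eq_one_right ?_
    rw [padeRate, ← mul_pow, ← sq_sub_sq, hsq, hsq']
    ring
  rw [hinv, padeKernel, div_le_iff₀ hs, ← sub_nonneg]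
  calc 0 ≤ (s - √(α + 1) * √α) ^ 2 := sq_nonneg _
    _ = (√(α + 1) - √α) ^ 2 * s - (α + 1 - s) * (s - α) := by
      linear_combination (√α ^ 2 - s) * hsq' + (α + 1 - s) * hsq

lemma padeKernel_nonneg (hα : 0 < α) (hs : s ∈ Set.Icc α (α + 1)) : 0 ≤ padeKernel α s :=
  div_nonneg (mul_nonneg (sub_nonneg.2 hs.2) (sub_nonneg.2 hs.1)) (hα.le.trans hs.1)

lemma padeKernel_le_one (hα : 0 < α) (hs : 0 < s) : padeKernel α s ≤ 1 :=
  (padeKernel_le_inv_padeRate hα hs).trans (inv_le_one_of_one_le₀ (one_le_padeRate hα.le))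

lemma intervalIntegrable_padeKernel_pow_mul_rpow (ν : ℝ) (hα : 0 < α) (n : ℕ) :
    IntervalIntegrable (fun s ↦ padeKernel α s ^ n * s ^ (ν - 1)) MeasureTheory.volume
      α (α + 1) := by
  have hne : ∀ s ∈ Set.uIcc α (α + 1), s ≠ 0 := fun s hs ↦ by
    rw [Set.uIcc_of_le (by linarith)] at hs
    exact (hα.trans_le hs.1).ne'
  exact ContinuousOn.intervalIntegrable <| .mul
    (.pow (.div (by fun_prop) continuousOn_id hne) n)
    (continuousOn_id.rpow_const fun s hs ↦ Or.inl (hne s hs))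

lemma padeRemainder_pos (hν₀ : 0 < ν) (hν₁ : ν < 1) (hα : 0 < α) (n : ℕ) :
    0 < padeRemainder ν α n := by
  refine mul_pos (padeWeight_pos hν₀ hν₁ n) <|
    intervalIntegral.intervalIntegral_pos_of_pos_on
      (intervalIntegrable_padeKernel_pow_mul_rpow ν hα n) (fun s hs ↦ ?_) (by linarith)
  have hs₀ : 0 < s := hα.trans hs.1
  exact mul_pos (pow_pos (div_pos (mul_pos (sub_pos.2 hs.2) (sub_pos.2 hs.1)) hs₀) n)
    (Real.rpow_pos_of_pos hs₀ _)

lemma padeRemainder_antitone (hν₀ : 0 < ν) (hν₁ : ν < 1) (hα : 0 < α) :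
    Antitone (padeRemainder ν α) := by
  intro m n hmn
  have hle : α ≤ α + 1 := by linarith
  refine mul_le_mul (padeWeight_antitone hν₀ hν₁ hmn) ?_ ?_ (padeWeight_pos hν₀ hν₁ m).le
  · refine intervalIntegral.integral_mono_on hle
      (intervalIntegrable_padeKernel_pow_mul_rpow ν hα n)
      (intervalIntegrable_padeKernel_pow_mul_rpow ν hα m) fun s hs ↦ ?_
    have hs₀ : 0 < s := hα.trans_le hs.1
    gcongr ?_ * _
    exact pow_le_pow_of_le_one (padeKernel_nonneg hα hs) (padeKernel_le_one hα hs₀) hmn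
  · refine intervalIntegral.integral_nonneg hle fun s hs ↦ ?_
    have hs₀ : 0 < s := hα.trans_le hs.1
    exact mul_nonneg (pow_nonneg (padeKernel_nonneg hα hs) n) (Real.rpow_nonneg hs₀.le _)

lemma padeRemainder_le (hν₀ : 0 < ν) (hν₁ : ν < 1) (hα : 0 < α) (n : ℕ) :
    padeRemainder ν α n ≤ ν * (α ^ (ν - 1) * (padeRate α)⁻¹ ^ n) := by
  have hrate := one_le_padeRate hα.le
  have hint : ∫ s in α..α + 1, padeKernel α s ^ n * s ^ (ν - 1) ≤
      ∫ _ in α..α + 1, (padeRate α)⁻¹ ^ n * α ^ (ν - 1) := by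
    refine intervalIntegral.integral_mono_on (by linarith)
      (intervalIntegrable_padeKernel_pow_mul_rpow ν hα n) (by simp) fun s hs ↦ ?_
    have hs₀ : 0 < s := hα.trans_le hs.1
    exact mul_le_mul
      (pow_le_pow_left₀ (padeKernel_nonneg hα hs) (padeKernel_le_inv_padeRate hα hs₀) n)
      (Real.rpow_le_rpow_of_nonpos hα hs.1 (by linarith)) (by positivity) (by positivity)
  rw [intervalIntegral.integral_const, add_sub_cancel_left, one_smul] at hint
  calc padeRemainder ν α n
      ≤ padeWeight ν n * ((padeRate α)⁻¹ ^ n * α ^ (ν - 1)) :=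
        mul_le_mul_of_nonneg_left hint (padeWeight_pos hν₀ hν₁ n).le
    _ ≤ ν * ((padeRate α)⁻¹ ^ n * α ^ (ν - 1)) := by gcongr; exact padeWeight_le hν₀ hν₁ n
    _ = ν * (α ^ (ν - 1) * (padeRate α)⁻¹ ^ n) := by ring

lemma padeCoeff_pos (hν₀ : 0 < ν) (n i : ℕ) : 0 < padeCoeff ν n i := by
  have hchoose := Nat.choose_pos (Nat.le_add_right n i)
  rw [padeCoeff]
  positivity

lemma padeCoeff_le_succ (hν₀ : 0 < ν) (hi : i ≤ n) : padeCoeff ν n i ≤ padeCoeff ν (n + 1) i := by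
  have hchoose : (n + i).choose n ≤ (n + 1 + i).choose (n + 1) := by
    rw [Nat.choose_symm_add, Nat.choose_symm_add]
    exact Nat.choose_le_choose _ (by lia)
  have hfactor : (1 : ℝ) ≤ ((n + 1 : ℕ) + ν) / (n - i + 1 : ℕ) := by
    rw [one_le_div (by positivity)]
    have hle : ((n - i + 1 : ℕ) : ℝ) ≤ (n + 1 : ℕ) := by exact_mod_cast (by lia)
    linarith
  rw [padeCoeff, padeCoeff, prod_Ico_succ_top (show i + 1 ≤ n + 1 by lia),
    Nat.succ_sub hi, Nat.factorial_succ]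
  calc _ ≤ (n + 1 + i).choose (n + 1) * (∏ l ∈ Ico (i + 1) (n + 1), (l + ν)) / (n - i).factorial *
        1 := by rw [mul_one]; gcongr
    _ ≤ (n + 1 + i).choose (n + 1) * (∏ l ∈ Ico (i + 1) (n + 1), (l + ν)) / (n - i).factorial *
        (((n + 1 : ℕ) + ν) / (n - i + 1 : ℕ)) := by gcongr
    _ = _ := by push_cast; field_simp

lemma padeSum_strictMono (hν₀ : 0 < ν) (hα : 0 < α) : StrictMono fun n ↦ padeSum ν n α := by
  refine strictMono_nat_of_lt_succ fun n ↦ ?_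
  simp only [padeSum]
  rw [sum_range_succ _ (n + 1)]
  refine lt_add_of_le_of_pos (sum_le_sum fun i hi ↦ ?_)
    (mul_pos (padeCoeff_pos hν₀ _ _) (by positivity))
  have hle := padeCoeff_le_succ hν₀ (Nat.lt_succ_iff.1 (mem_range.1 hi))
  gcongr

lemma one_le_padeSum (hν₀ : 0 < ν) (hα : 0 < α) (n : ℕ) : 1 ≤ padeSum ν n α :=
  le_trans (by simp [padeSum, padeCoeff]) ((padeSum_strictMono hν₀ hα).monotone n.zero_le)

lemma neg_one_pow_mul_padeSum_pos (hν₀ : 0 < ν) (hν₁ : ν < 1) (hα : 0 < α) (n : ℕ) :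
    0 < (-1) ^ n * padeSum ν n (-(α + 1)) := by
  have hident := neg_one_pow_mul_rpow_mul_padeSum_sub hν₀ hν₁ hα n
  have hsum := one_le_padeSum hν₀ hα n
  have hpos : 0 < (α + 1) ^ ν * ((-1) ^ n * padeSum ν n (-(α + 1))) := by
    rw [show (α + 1) ^ ν * ((-1) ^ n * padeSum ν n (-(α + 1))) =
      padeRemainder ν α n + α ^ ν * padeSum ν n α by rw [← hident]; ring]
    exact add_pos (padeRemainder_pos hν₀ hν₁ hα n) (by positivity)
  exact pos_of_mul_pos_right hpos (by positivity)

-- The remainders decrease while the numerators increase, so the approximants cannot coincide.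
lemma padeSum_mul_padeSum_ne (hν₀ : 0 < ν) (hν₁ : ν < 1) (hα : 0 < α) {m n : ℕ} (hmn : m < n) :
    padeSum ν m α * ((-1) ^ n * padeSum ν n (-(α + 1))) ≠
      padeSum ν n α * ((-1) ^ m * padeSum ν m (-(α + 1))) := by
  intro heq
  have hm := neg_one_pow_mul_rpow_mul_padeSum_sub hν₀ hν₁ hα m
  have hn := neg_one_pow_mul_rpow_mul_padeSum_sub hν₀ hν₁ hα n
  have hprop : padeRemainder ν α n * padeSum ν m α = padeRemainder ν α m * padeSum ν n α := by
    rw [← hm, ← hn]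
    linear_combination (α + 1) ^ ν * heq
  refine hprop.not_lt ?_
  exact mul_lt_mul' (padeRemainder_antitone hν₀ hν₁ hα hmn.le) (padeSum_strictMono hν₀ hα hmn)
    (zero_le_one.trans (one_le_padeSum hν₀ hα m)) (padeRemainder_pos hν₀ hν₁ hα m)

lemma sum_choose_succ_mul_pow (x : ℝ) (n : ℕ) :
    ∑ i ∈ range (n + 2), (n + 1 + i).choose (2 * i) * x ^ i =
      ∑ i ∈ range (n + 1), (n + i).choose (2 * i) * x ^ i +
        x * ∑ i ∈ range (n + 1), (n + i + 1).choose (2 * i + 1) * x ^ i := by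
  have hpascal (i : ℕ) : ((n + 1 + (i + 1)).choose (2 * (i + 1)) : ℝ) * x ^ (i + 1) =
      (n + (i + 1)).choose (2 * (i + 1)) * x ^ (i + 1) +
        x * ((n + i + 1).choose (2 * i + 1) * x ^ i) := by
    rw [show n + 1 + (i + 1) = n + i + 1 + 1 by ring, show 2 * (i + 1) = 2 * i + 1 + 1 by ring,
      Nat.choose_succ_succ, ← add_assoc n i 1]
    push_cast
    ring
  have hextend := sum_range_succ (fun i ↦ ((n + i).choose (2 * i) : ℝ) * x ^ i) (n + 1)
  rw [Nat.choose_eq_zero_of_lt (show n + (n + 1) < 2 * (n + 1) by lia), Nat.cast_zero, zero_mul,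
    add_zero, sum_range_succ'] at hextend
  rw [sum_range_succ', sum_congr rfl fun i _ ↦ hpascal i, sum_add_distrib, ← hextend, mul_sum]
  simp only [mul_zero, Nat.choose_zero_right]
  ring

lemma sum_choose_odd_succ_mul_pow (x : ℝ) (n : ℕ) :
    ∑ i ∈ range (n + 2), (n + 1 + i + 1).choose (2 * i + 1) * x ^ i =
      ∑ i ∈ range (n + 1), (n + i + 1).choose (2 * i + 1) * x ^ i +
        ∑ i ∈ range (n + 2), (n + 1 + i).choose (2 * i) * x ^ i := by
  have hextend := sum_range_succ (fun i ↦ ((n + i + 1).choose (2 * i + 1) : ℝ) * x ^ i) (n + 1)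
  rw [Nat.choose_eq_zero_of_lt (show n + (n + 1) + 1 < 2 * (n + 1) + 1 by lia), Nat.cast_zero,
    zero_mul, add_zero] at hextend
  rw [← hextend, ← sum_add_distrib]
  refine sum_congr rfl fun i _ ↦ ?_
  rw [Nat.choose_succ_succ, show n + 1 + i = n + i + 1 by ring]
  push_cast
  ring

lemma sum_choose_mul_pow_le {x r : ℝ} (hx : 0 < x) (hr : x + 1 ≤ r) (hxr : (r - 1) ^ 2 = x * r)
    (n : ℕ) :
    ∑ i ∈ range (n + 1), (n + i).choose (2 * i) * x ^ i ≤ r ^ n ∧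
      x * ∑ i ∈ range (n + 1), (n + i + 1).choose (2 * i + 1) * x ^ i ≤ (r - 1) * r ^ n := by
  induction n with
  | zero => simpa using by linarith
  | succ n ih =>
    have heven := sum_choose_succ_mul_pow x n
    have hodd := sum_choose_odd_succ_mul_pow x n
    have hle : ∑ i ∈ range (n + 2), (n + 1 + i).choose (2 * i) * x ^ i ≤ r ^ (n + 1) := by
      rw [heven, pow_succ]
      linarith [ih.1, ih.2]
    refine ⟨hle, ?_⟩
    rw [hodd, mul_add]
    calc _ ≤ (r - 1) * r ^ n + x * r ^ (n + 1) :=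
          add_le_add ih.2 (mul_le_mul_of_nonneg_left hle hx.le)
      _ = (r - 1) * r ^ (n + 1) := by linear_combination (-r ^ n) * hxr

lemma prod_Ico_add_div_factorial_le (hν₀ : 0 < ν) (hν₁ : ν < 1) (hi : i ≤ n) :
    (∏ l ∈ Ico (i + 1) (n + 1), (l + ν)) / (n - i).factorial ≤ (n + 1) * n.choose i := by
  have hascend : (∏ l ∈ Ico (i + 1) (n + 1), ((l : ℝ) + 1)) * (i + 1).factorial =
      (n + 1).factorial := by
    rw [← prod_range_add_one_eq_factorial, ← prod_range_add_one_eq_factorial, mul_comm]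
    push_cast
    exact prod_range_mul_prod_Ico (fun l : ℕ ↦ (l : ℝ) + 1) (by lia)
  have hchoose : (n.choose i : ℝ) * i.factorial * (n - i).factorial = n.factorial := by
    exact_mod_cast Nat.choose_mul_factorial_mul_factorial hi
  have hle : ∏ l ∈ Ico (i + 1) (n + 1), (l + ν) ≤ ∏ l ∈ Ico (i + 1) (n + 1), ((l : ℝ) + 1) := by
    gcongr with l
  rw [div_le_iff₀ (by positivity)]
  refine hle.trans (le_of_mul_le_mul_right ?_ (show (0 : ℝ) < (i + 1).factorial by positivity))
  rw [hascend, Nat.factorial_succ, Nat.factorial_succ, Nat.cast_mul, Nat.cast_mul, ← hchoose]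
  push_cast
  calc _ = (n + 1) * n.choose i * (n - i).factorial * (1 * i.factorial : ℝ) := by ring
    _ ≤ (n + 1) * n.choose i * (n - i).factorial * ((i + 1) * i.factorial) := by
      gcongr
      linarith [Nat.cast_nonneg (α := ℝ) i]

lemma padeCoeff_le (hν₀ : 0 < ν) (hν₁ : ν < 1) (hi : i ≤ n) :
    padeCoeff ν n i ≤ (n + 1) * ((n + i).choose (2 * i) * 4 ^ i) := by
  have hchoose : (n + i).choose n * n.choose i = (n + i).choose (2 * i) * (2 * i).choose i := by
    rw [Nat.choose_mul (show i ≤ 2 * i by lia), Nat.choose_symm_add]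
    congr 2 <;> lia
  have hcentral : (2 * i).choose i ≤ 4 ^ i :=
    (Nat.choose_le_two_pow (2 * i) i).trans_eq (pow_mul 2 2 i)
  calc padeCoeff ν n i
      = (n + i).choose n * ((∏ l ∈ Ico (i + 1) (n + 1), (l + ν)) / (n - i).factorial) := by
        rw [padeCoeff, mul_div_assoc]
    _ ≤ (n + i).choose n * ((n + 1) * n.choose i) := by
        gcongr
        exact prod_Ico_add_div_factorial_le hν₀ hν₁ hi
    _ = (n + 1) * (((n + i).choose n * n.choose i : ℕ) : ℝ) := by push_cast; ring
    _ ≤ (n + 1) * ((n + i).choose (2 * i) * 4 ^ i) := by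
        rw [hchoose]
        push_cast
        gcongr
        exact_mod_cast hcentral

lemma padeSum_le (hν₀ : 0 < ν) (hν₁ : ν < 1) (hα : 0 < α) (n : ℕ) :
    padeSum ν n α ≤ (n + 1) * padeRate α ^ n := by
  have hrate : 4 * α + 1 ≤ padeRate α := by
    have hsqrt : √α ≤ √(α + 1) := Real.sqrt_le_sqrt (by linarith)
    rw [padeRate]
    nlinarith [Real.sq_sqrt hα.le, Real.sq_sqrt (show 0 ≤ α + 1 by linarith), Real.sqrt_nonneg α]
  calc padeSum ν n α
      ≤ ∑ i ∈ range (n + 1), (n + 1) * ((n + i).choose (2 * i) * (4 * α) ^ i) := by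
        refine sum_le_sum fun i hi ↦ ?_
        have hcoeff := padeCoeff_le hν₀ hν₁ (Nat.lt_succ_iff.1 (mem_range.1 hi))
        rw [mul_pow, ← mul_assoc (_ : ℝ) (4 ^ i), ← mul_assoc]
        gcongr
    _ = (n + 1) * ∑ i ∈ range (n + 1), (n + i).choose (2 * i) * (4 * α) ^ i := by rw [mul_sum]
    _ ≤ (n + 1) * padeRate α ^ n := by
        gcongr
        exact (sum_choose_mul_pow_le (by positivity) hrate (padeRate_sub_one_sq hα.le) n).1

end Pade

/-! ### Denominators of the approximants to `x ↦ x ^ (1 / 3)` -/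

section Denominators

open scoped Nat

variable {a q n i j p B : ℕ}

private lemma modEq_iff_dvd_three_mul_add_one (ha : 3 * a + 1 = q ∨ 3 * a + 1 = 2 * q) (l : ℕ) :
    l ≡ a [MOD q] ↔ q ∣ 3 * l + 1 := by
  have hcop : q.Coprime 3 := by
    rw [Nat.coprime_comm, Nat.prime_three.coprime_iff_not_dvd]
    omega
  have hqa : 3 * a + 1 ≡ 0 [MOD q] := by
    refine Nat.modEq_zero_iff_dvd.2 ?_
    rcases ha with h | h <;> rw [h]
    exact dvd_mul_left _ _
  rw [← Nat.modEq_zero_iff_dvd]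
  refine ⟨fun h ↦ ((h.mul_left 3).add_right 1).trans hqa, fun h ↦ ?_⟩
  exact Nat.ModEq.cancel_left_of_coprime hcop (Nat.ModEq.add_right_cancel' 1 (h.trans hqa.symm))

lemma card_filter_range_dvd_three_mul_add_one (ha : 3 * a + 1 = q ∨ 3 * a + 1 = 2 * q) (n : ℕ) :
    #{l ∈ range (n + 1) | q ∣ 3 * l + 1} = n / q + if a ≤ n % q then 1 else 0 := by
  have haq : a % q = a := Nat.mod_eq_of_lt (by omega)
  simp only [← modEq_iff_dvd_three_mul_add_one ha]
  rw [← Nat.count_eq_card_filter_range, Nat.count_succ, Nat.count_modEq_card _ (by omega), haq]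
  simp only [Nat.ModEq, haq]
  split_ifs <;> omega

lemma card_filter_Ico_dvd_three_mul_add_one (ha : 3 * a + 1 = q ∨ 3 * a + 1 = 2 * q)
    (hi : i ≤ n) :
    #{l ∈ Ico (i + 1) (n + 1) | q ∣ 3 * l + 1} + (i / q + if a ≤ i % q then 1 else 0) =
      n / q + if a ≤ n % q then 1 else 0 := by
  rw [← card_filter_range_dvd_three_mul_add_one ha, ← card_filter_range_dvd_three_mul_add_one ha]
  simp only [card_filter]
  rw [add_comm, sum_range_add_sum_Ico _ (by omega)]

lemma div_add_div_add_div_le_card (hq3 : ¬ 3 ∣ q) (hi : i ≤ n) :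
    (n - i) / q + i / q + n / q + (if 2 * q ≤ 3 * (n % q) then 1 else 0) ≤
      (n + i) / q + #{l ∈ Ico (i + 1) (n + 1) | q ∣ 3 * l + 1} := by
  have hq : 0 < q := Nat.pos_of_ne_zero fun h ↦ hq3 (h ▸ dvd_zero 3)
  obtain ⟨a, ha⟩ : ∃ a, 3 * a + 1 = q ∨ 3 * a + 1 = 2 * q := by
    rcases (by omega : q % 3 = 1 ∨ q % 3 = 2) with h | h
    · exact ⟨q / 3, by omega⟩
    · exact ⟨2 * q / 3, by omega⟩
  have hcard := card_filter_Ico_dvd_three_mul_add_one ha hi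
  have hsub : (n - i) / q + i / q + (if n % q < i % q then 1 else 0) ≤ n / q := by
    have hdiv := Nat.add_div (a := n - i) (b := i) hq
    rw [Nat.sub_add_cancel hi] at hdiv
    rcases le_or_gt q ((n - i) % q + i % q) with hcarry | hcarry
    · rw [if_pos hcarry] at hdiv
      split_ifs <;> omega
    · have hmod := Nat.add_mod_of_add_mod_lt hcarry
      rw [Nat.sub_add_cancel hi] at hmod
      rw [if_neg hcarry.not_ge] at hdiv
      rw [if_neg (by omega), hdiv]
  have hadd := Nat.add_div (a := n) (b := i) hq
  have := Nat.mod_lt n hq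
  have := Nat.mod_lt i hq
  split_ifs at hcard hsub hadd ⊢ <;> omega

lemma six_mul_div_add_div_le (hq : 0 < q) (j : ℕ) :
    6 * j / q + j / q ≤ 4 * j / q + 3 * j / q + if 2 * q ≤ 3 * (4 * j % q) then 1 else 0 := by
  have hdiv (k : ℕ) : k * j / q = k * (j / q) + k * (j % q) / q := by
    conv_lhs => rw [← Nat.div_add_mod j q, mul_add, mul_left_comm, Nat.mul_add_div hq]
  have hmod : 4 * j % q = 4 * (j % q) % q := by simp [Nat.mul_mod]
  rw [hdiv 6, hdiv 4, hdiv 3, hmod]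
  have hρ := Nat.mod_lt j hq
  generalize j % q = ρ at *
  have h6 := Nat.div_mul_le_self (6 * ρ) q
  have h3 := Nat.lt_div_mul_add (a := 3 * ρ) hq
  have h4 := Nat.div_add_mod' (4 * ρ) q
  have h4' := Nat.mod_lt (4 * ρ) hq
  have hN : 6 * ρ / q < 6 := (Nat.div_lt_iff_lt_mul hq).2 (by omega)
  have hK : 4 * ρ / q < 4 := (Nat.div_lt_iff_lt_mul hq).2 (by omega)
  have hM : 3 * ρ / q < 3 := (Nat.div_lt_iff_lt_mul hq).2 (by omega)
  generalize 4 * ρ / q = K, 6 * ρ / q = N, 3 * ρ / q = M, 4 * ρ % q = r at *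
  split_ifs <;> interval_cases N <;> interval_cases K <;> interval_cases M <;> omega

lemma factorization_factorial_eq_sum (hp : p.Prime) (hB : n < p ^ B) :
    (n !).factorization p = ∑ k ∈ Ico 1 B, n / p ^ k := by
  rcases eq_or_ne n 0 with rfl | hn
  · simp
  · exact Nat.factorization_factorial hp (Nat.log_lt_of_lt_pow hn hB)

lemma factorization_prod_three_mul_add_one (hp : p.Prime) (hB : 3 * n + 1 < p ^ B) :
    (∏ l ∈ Ico (i + 1) (n + 1), (3 * l + 1)).factorization p =
      ∑ k ∈ Ico 1 B, #{l ∈ Ico (i + 1) (n + 1) | p ^ k ∣ 3 * l + 1} := by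
  have hterm : ∀ l ∈ Ico (i + 1) (n + 1),
      (3 * l + 1).factorization p = ∑ k ∈ Ico 1 B, if p ^ k ∣ 3 * l + 1 then 1 else 0 := by
    intro l hl
    have := mem_Ico.1 hl
    rw [Nat.factorization_eq_card_pow_dvd_of_lt hp (by omega) (by omega : 3 * l + 1 < p ^ B),
      card_filter]
  rw [Nat.factorization_prod_apply fun l _ ↦ by omega, sum_congr rfl hterm, sum_comm]
  simp only [card_filter]

private lemma factorization_le_of_ne_three (hp : p.Prime) (hp3 : p ≠ 3) (hi : i ≤ 4 * j) :
    ((4 * j - i)!).factorization p + (i !).factorization p + ((6 * j)!).factorization p +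
        (j !).factorization p ≤
      ((4 * j + i)!).factorization p + ((3 * j)!).factorization p +
        (∏ l ∈ Ico (i + 1) (4 * j + 1), (3 * l + 1)).factorization p := by
  have hB : 12 * j + 1 < p ^ (12 * j + 1) := Nat.lt_pow_self hp.one_lt
  rw [factorization_prod_three_mul_add_one (B := 12 * j + 1) hp (by omega)]
  iterate 6 rw [factorization_factorial_eq_sum (B := 12 * j + 1) hp (by omega)]
  simp only [← sum_add_distrib]
  refine sum_le_sum fun k _ ↦ ?_
  have hpk : ¬ 3 ∣ p ^ k := fun h ↦
    hp3 ((Nat.prime_dvd_prime_iff_eq Nat.prime_three hp).1 (Nat.prime_three.dvd_of_dvd_pow h)).symm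
  have := div_add_div_add_div_le_card hpk hi
  have := six_mul_div_add_div_le (pow_pos hp.pos k) j
  omega

private lemma factorization_three_le (hi : i ≤ 4 * j) :
    ((4 * j - i)!).factorization 3 + (i !).factorization 3 + ((6 * j)!).factorization 3 +
        (j !).factorization 3 + (4 * j - i) ≤
      6 * j + Nat.log 3 (12 * j) + ((4 * j + i)!).factorization 3 +
        ((3 * j)!).factorization 3 := by
  set B := Nat.log 3 (12 * j) + 1
  have hB : 12 * j < 3 ^ B := Nat.lt_pow_succ_log_self (by norm_num) _
  have hfactorial {m : ℕ} (hm : m ≤ 12 * j) :=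
    factorization_factorial_eq_sum Nat.prime_three (hm.trans_lt hB)
  have hfac := Nat.factorization_factorial_le_div_pred Nat.prime_three (4 * j - i)
  have hsum : ∑ k ∈ Ico 1 B, (i / 3 ^ k + 6 * j / 3 ^ k + j / 3 ^ k) ≤
      ∑ k ∈ Ico 1 B, ((4 * j + i) / 3 ^ k + 3 * j / 3 ^ k + 1) := by
    refine sum_le_sum fun k _ ↦ ?_
    have := six_mul_div_add_div_le (pow_pos (by norm_num : 0 < 3) k) j
    have : 4 * j / 3 ^ k + i / 3 ^ k ≤ (4 * j + i) / 3 ^ k := Nat.div_add_div_le_add_div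
    split_ifs at * <;> omega
  simp only [sum_add_distrib, sum_const, Nat.card_Ico, smul_eq_mul] at hsum
  rw [hfactorial (by omega : i ≤ 12 * j), hfactorial (by omega : 6 * j ≤ 12 * j),
    hfactorial (by omega : j ≤ 12 * j), hfactorial (by omega : 4 * j + i ≤ 12 * j),
    hfactorial (by omega : 3 * j ≤ 12 * j)]
  omega

lemma factorial_mul_dvd_three_pow_mul (hi : i ≤ 4 * j) :
    (4 * j - i)! * i ! * (6 * j)! * j ! * 3 ^ (4 * j - i) ∣
      3 ^ (6 * j + Nat.log 3 (12 * j)) * (4 * j + i)! * (3 * j)! *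
        ∏ l ∈ Ico (i + 1) (4 * j + 1), (3 * l + 1) := by
  have hprod : ∏ l ∈ Ico (i + 1) (4 * j + 1), (3 * l + 1) ≠ 0 :=
    prod_ne_zero_iff.2 fun l _ ↦ by omega
  rw [← Nat.factorization_prime_le_iff_dvd (by positivity)
    (mul_ne_zero (by positivity) hprod)]
  intro p hp
  rw [Nat.factorization_mul (by positivity) hprod]
  iterate 6 rw [Nat.factorization_mul (by positivity) (by positivity)]
  simp only [Finsupp.add_apply, Nat.factorization_pow, Finsupp.smul_apply, smul_eq_mul]
  rcases eq_or_ne p 3 with rfl | hp3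
  · have := factorization_three_le hi
    rw [hp.factorization_self]
    omega
  · have h3p : Nat.factorization 3 p = 0 :=
      Nat.factorization_eq_zero_of_not_dvd fun h ↦
        hp3 ((Nat.prime_dvd_prime_iff_eq hp Nat.prime_three).1 h)
    have := factorization_le_of_ne_three hp hp3 hi
    rw [h3p]
    omega

/-- A common multiple of the denominators of the coefficients `padeCoeff (1 / 3) (4 * j) i`. The
quotient of factorials divides out (up to a power of `3`) the primes `p` for which the fractional
part of `4 * j / p` is at least `2 / 3`, since these divide all numerators. -/
noncomputable def padeDenom (j : ℕ) : ℝ :=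
  3 ^ (6 * j + Nat.log 3 (12 * j)) * (4 * j)! * (3 * j)! / ((6 * j)! * j !)

lemma padeDenom_pos (j : ℕ) : 0 < padeDenom j := by
  unfold padeDenom
  positivity

lemma exists_int_eq_padeDenom_mul_padeCoeff (hi : i ≤ 4 * j) :
    ∃ z : ℤ, (z : ℝ) = padeDenom j * padeCoeff (1 / 3) (4 * j) i := by
  obtain ⟨d, hd⟩ := factorial_mul_dvd_three_pow_mul hi
  refine ⟨d, ?_⟩
  have hd' : (3 : ℝ) ^ (6 * j + Nat.log 3 (12 * j)) * (4 * j + i)! * (3 * j)! *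
      (∏ l ∈ Ico (i + 1) (4 * j + 1), (3 * (l : ℝ) + 1)) =
      ((4 * j - i)! * i ! * (6 * j)! * j ! * 3 ^ (4 * j - i)) * (d : ℝ) := by exact_mod_cast hd
  have hprod : ∏ l ∈ Ico (i + 1) (4 * j + 1), (3 * (l : ℝ) + 1) =
      3 ^ (4 * j - i) * ∏ l ∈ Ico (i + 1) (4 * j + 1), ((l : ℝ) + 1 / 3) := by
    have hcard : #(Ico (i + 1) (4 * j + 1)) = 4 * j - i := by simp
    rw [← hcard, ← prod_const, ← prod_mul_distrib]
    exact prod_congr rfl fun l _ ↦ by ring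
  have hchoose : ((4 * j + i).choose (4 * j) : ℝ) * (4 * j)! * i ! = (4 * j + i)! := by
    rw [Nat.choose_symm_add]
    exact_mod_cast Nat.add_choose_mul_factorial_mul_factorial (4 * j) i
  rw [hprod, ← hchoose] at hd'
  have hi0 : (i ! : ℝ) * 3 ^ (4 * j - i) ≠ 0 := by positivity
  rw [padeDenom, padeCoeff, Int.cast_natCast, div_mul_div_comm, eq_div_iff (by positivity)]
  refine mul_left_cancel₀ hi0 ?_
  linear_combination -hd'

lemma exists_int_eq_padeDenom_mul_padeSum (j : ℕ) (t : ℤ) :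
    ∃ z : ℤ, (z : ℝ) = padeDenom j * padeSum (1 / 3) (4 * j) t := by
  choose! f hf using fun i (hi : i ∈ range (4 * j + 1)) ↦
    exists_int_eq_padeDenom_mul_padeCoeff (Nat.lt_succ_iff.1 (mem_range.1 hi))
  refine ⟨∑ i ∈ range (4 * j + 1), f i * t ^ i, ?_⟩
  push_cast
  rw [padeSum, mul_sum]
  exact sum_congr rfl fun i hi ↦ by rw [hf i hi, mul_assoc]

private lemma pow_mul_factorial_le (j : ℕ) :
    27 ^ j * (j + 1) * ((4 * j)! * (3 * j)!) ≤ 4 ^ j * (2 * j + 1) * ((6 * j)! * j !) := by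
  induction j with
  | zero => simp
  | succ j ih =>
    have hratio : 27 * (j + 2) * (2 * j + 1) * ((4 * j + 1) * (4 * j + 3)) ≤
        4 * (2 * j + 3) * (j + 1) * (3 * (6 * j + 1) * (6 * j + 5)) := by nlinarith
    simp only [mul_add_one, Nat.factorial, Nat.succ_eq_add_one]
    refine le_of_mul_le_mul_left ?_ (by positivity : 0 < (j + 1) * (2 * j + 1))
    generalize (4 * j)! = a, (3 * j)! = b, (6 * j)! = c, j ! = d at *
    let e := (4 * j + 4) * (4 * j + 2) * (3 * j + 3) * (3 * j + 2) * (3 * j + 1)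
    calc _ = (27 * (j + 2) * (2 * j + 1) * ((4 * j + 1) * (4 * j + 3))) * e *
          (27 ^ j * (j + 1) * (a * b)) := by simp only [e]; ring
      _ ≤ (4 * (2 * j + 3) * (j + 1) * (3 * (6 * j + 1) * (6 * j + 5))) * e *
          (4 ^ j * (2 * j + 1) * (c * d)) := by gcongr
      _ = _ := by simp only [e]; ring

lemma padeDenom_le (hj : 1 ≤ j) : padeDenom j ≤ 24 * j * 108 ^ j := by
  have hlog : (3 : ℝ) ^ Nat.log 3 (12 * j) ≤ 12 * j := by
    exact_mod_cast Nat.pow_log_le_self 3 (by omega)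
  have hfac : (27 : ℝ) ^ j * ((4 * j)! * (3 * j)!) ≤ 2 * 4 ^ j * ((6 * j)! * j !) := by
    have h := pow_mul_factorial_le j
    have h' : (j + 1) * (27 ^ j * ((4 * j)! * (3 * j)!)) ≤
        (j + 1) * (2 * 4 ^ j * ((6 * j)! * j !)) := by
      linarith [Nat.zero_le (4 ^ j * ((6 * j)! * j !))]
    exact_mod_cast le_of_mul_le_mul_left h' j.succ_pos
  have hthree : (3 : ℝ) ^ (6 * j) = 27 ^ j * 27 ^ j := by
    rw [pow_mul, ← mul_pow]
    norm_num
  have h108 : (108 : ℝ) ^ j = 27 ^ j * 4 ^ j := by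
    rw [← mul_pow]
    norm_num
  rw [padeDenom, div_le_iff₀ (by positivity), pow_add, hthree, h108]
  calc (27 : ℝ) ^ j * 27 ^ j * 3 ^ Nat.log 3 (12 * j) * (4 * j)! * (3 * j)!
      = 27 ^ j * 3 ^ Nat.log 3 (12 * j) * (27 ^ j * ((4 * j)! * (3 * j)!)) := by ring
    _ ≤ 27 ^ j * (12 * j) * (2 * 4 ^ j * ((6 * j)! * j !)) := by gcongr
    _ = 24 * j * (27 ^ j * 4 ^ j) * ((6 * j)! * j !) := by ring

end Denominators

/-! ### Rational approximations to the cube root of `9` -/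

section CubeRoot

variable {j : ℕ}

/-- The real cube root of `9`. -/
noncomputable def cbrtNine : ℝ := 9 ^ (1 / 3 : ℝ)

lemma cbrtNine_pow_three : cbrtNine ^ 3 = 9 := by
  rw [cbrtNine, ← Real.rpow_natCast, ← Real.rpow_mul (by norm_num)]
  norm_num

lemma lt_cbrtNine : 2.08 < cbrtNine :=
  lt_of_pow_lt_pow_left₀ 3 (by unfold cbrtNine; positivity) (by rw [cbrtNine_pow_three]; norm_num)

lemma padeRate_eight_pow_four_add_inv :
    padeRate 8 ^ 4 + (padeRate 8 ^ 4)⁻¹ = 1331714 := by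
  have h := padeRate_sub_one_sq (α := 8) (by norm_num)
  have hpos : padeRate 8 ^ 4 ≠ 0 := by
    have := one_le_padeRate (α := 8) (by norm_num)
    positivity
  rw [← mul_left_inj' hpos, add_mul, inv_mul_cancel₀ hpos]
  generalize padeRate 8 = μ at h
  have h' : μ ^ 2 = 34 * μ - 1 := by linear_combination h
  have h4 : μ ^ 4 = 39236 * μ - 1155 := by linear_combination (μ ^ 2 + 34 * μ + 1155) * h'
  linear_combination (μ ^ 4 + 39236 * μ - 1155 - 1331714) * h4 + 39236 ^ 2 * h'

lemma padeRate_eight_pow_four_le : padeRate 8 ^ 4 ≤ 1331714 := by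
  have h := padeRate_eight_pow_four_add_inv
  have : 0 ≤ (padeRate 8 ^ 4)⁻¹ := by positivity
  linarith

lemma le_padeRate_eight_pow_four : 1331640 ≤ padeRate 8 ^ 4 := by
  have h := padeRate_eight_pow_four_add_inv
  have : (padeRate 8 ^ 4)⁻¹ ≤ 1 :=
    inv_le_one_of_one_le₀ (one_le_pow₀ (one_le_padeRate (by norm_num)))
  linarith

private lemma neg_one_pow_four_mul (j : ℕ) : (-1 : ℝ) ^ (4 * j) = 1 :=
  ((even_iff_two_dvd.2 (by norm_num)).mul_right j).neg_one_pow

lemma cbrtNine_mul_padeSum_sub (j : ℕ) :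
    cbrtNine * padeSum (1 / 3) (4 * j) (-9) - 2 * padeSum (1 / 3) (4 * j) 8 =
      padeRemainder (1 / 3) 8 (4 * j) := by
  have h := neg_one_pow_mul_rpow_mul_padeSum_sub (ν := 1 / 3) (α := 8) (by norm_num) (by norm_num)
    (by norm_num) (4 * j)
  have height : (8 : ℝ) ^ (1 / 3 : ℝ) = 2 := by
    rw [show (8 : ℝ) = 2 ^ (3 : ℝ) by norm_num, ← Real.rpow_mul (by norm_num)]
    norm_num
  rw [neg_one_pow_four_mul, one_mul, height] at h
  norm_num at h ⊢
  exact h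

lemma padeRemainder_eight_le (j : ℕ) :
    padeRemainder (1 / 3) 8 (4 * j) ≤ (1 / 1331640) ^ j / 12 := by
  have h := padeRemainder_le (ν := 1 / 3) (α := 8) (by norm_num) (by norm_num) (by norm_num)
    (4 * j)
  have height : (8 : ℝ) ^ ((1 / 3 : ℝ) - 1) = 1 / 4 := by
    rw [show (8 : ℝ) = 2 ^ (3 : ℝ) by norm_num, ← Real.rpow_mul (by norm_num)]
    norm_num
  have hrate : (padeRate 8)⁻¹ ^ (4 * j) ≤ (1 / 1331640) ^ j := by
    rw [pow_mul, inv_pow, one_div]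
    gcongr
    exact le_padeRate_eight_pow_four
  rw [height] at h
  linarith

lemma padeSum_neg_nine_pos (j : ℕ) : 0 < padeSum (1 / 3) (4 * j) (-9) := by
  have h := neg_one_pow_mul_padeSum_pos (ν := 1 / 3) (α := 8) (by norm_num) (by norm_num)
    (by norm_num) (4 * j)
  rw [neg_one_pow_four_mul, one_mul] at h
  norm_num at h ⊢
  exact h

lemma padeSum_neg_nine_le (hj : 1 ≤ j) :
    padeSum (1 / 3) (4 * j) (-9) ≤ (4 * j + 1) * 1331714 ^ j := by
  have hid := cbrtNine_mul_padeSum_sub j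
  have hrem := padeRemainder_eight_le j
  have hone := one_le_padeSum (ν := 1 / 3) (α := 8) (by norm_num) (by norm_num) (4 * j)
  have hpow : (1 / 1331640 : ℝ) ^ j ≤ 1 / 1331640 :=
    pow_le_of_le_one (by norm_num) (by norm_num) (by omega)
  have hθ : 2.08 * padeSum (1 / 3) (4 * j) (-9) ≤ cbrtNine * padeSum (1 / 3) (4 * j) (-9) :=
    mul_le_mul_of_nonneg_right lt_cbrtNine.le (padeSum_neg_nine_pos j).le
  calc padeSum (1 / 3) (4 * j) (-9) ≤ padeSum (1 / 3) (4 * j) 8 := by linarith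
    _ ≤ ((4 * j : ℕ) + 1) * padeRate 8 ^ (4 * j) :=
      padeSum_le (by norm_num) (by norm_num) (by norm_num) _
    _ ≤ (4 * j + 1) * 1331714 ^ j := by
      rw [pow_mul]
      push_cast
      gcongr
      exact padeRate_eight_pow_four_le

lemma padeDenom_mul_padeRemainder_le (hj : 1 ≤ j) :
    padeDenom j * padeRemainder (1 / 3) 8 (4 * j) ≤ 2 * j / 12330 ^ j := by
  have hrem := padeRemainder_pos (ν := 1 / 3) (α := 8) (by norm_num) (by norm_num) (by norm_num)
    (4 * j)
  calc padeDenom j * padeRemainder (1 / 3) 8 (4 * j)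
      ≤ 24 * j * 108 ^ j * ((1 / 1331640) ^ j / 12) := by
        gcongr
        exacts [padeDenom_le hj, padeRemainder_eight_le j]
    _ = 2 * j * (108 * (1 / 1331640)) ^ j := by rw [mul_pow]; ring
    _ = 2 * j / 12330 ^ j := by
      rw [show (108 * (1 / 1331640) : ℝ) = 12330⁻¹ by norm_num, inv_pow, div_eq_mul_inv]

lemma exists_int_approx_cbrtNine (hj : 1 ≤ j) :
    ∃ P Q : ℤ, (P : ℝ) = padeDenom j * padeSum (1 / 3) (4 * j) (-9) ∧
      (Q : ℝ) = 2 * (padeDenom j * padeSum (1 / 3) (4 * j) 8) ∧ 0 < P ∧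
      (P : ℝ) ≤ 24 * j * (4 * j + 1) * 143825112 ^ j ∧ |cbrtNine * P - Q| ≤ 2 * j / 12330 ^ j := by
  obtain ⟨P, hP⟩ := exists_int_eq_padeDenom_mul_padeSum j (-9)
  obtain ⟨Q, hQ⟩ := exists_int_eq_padeDenom_mul_padeSum j 8
  push_cast at hP hQ
  have hpos := padeSum_neg_nine_pos j
  refine ⟨P, 2 * Q, hP, by push_cast; rw [hQ], ?_, ?_, ?_⟩
  · rw [← Int.cast_pos (R := ℝ), hP]
    exact mul_pos (padeDenom_pos j) hpos
  · calc (P : ℝ) ≤ 24 * j * 108 ^ j * ((4 * j + 1) * 1331714 ^ j) := by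
          rw [hP]
          gcongr
          exacts [padeDenom_le hj, padeSum_neg_nine_le hj]
      _ = 24 * j * (4 * j + 1) * (108 * 1331714) ^ j := by rw [mul_pow]; ring
      _ = 24 * j * (4 * j + 1) * 143825112 ^ j := by norm_num
  · have herr : cbrtNine * P - (2 * Q : ℤ) =
        padeDenom j * padeRemainder (1 / 3) 8 (4 * j) := by
      rw [← cbrtNine_mul_padeSum_sub]
      push_cast
      rw [hP, hQ]
      ring
    have hrem := padeRemainder_pos (ν := 1 / 3) (α := 8) (by norm_num) (by norm_num)
      (by norm_num) (4 * j)
    rw [herr, abs_of_pos (mul_pos (padeDenom_pos j) hrem)]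
    exact padeDenom_mul_padeRemainder_le hj

lemma padeSum_eight_mul_padeSum_neg_nine_ne (j : ℕ) :
    padeSum (1 / 3) (4 * j) 8 * padeSum (1 / 3) (4 * (j + 1)) (-9) ≠
      padeSum (1 / 3) (4 * (j + 1)) 8 * padeSum (1 / 3) (4 * j) (-9) := by
  have h := padeSum_mul_padeSum_ne (ν := 1 / 3) (α := 8) (by norm_num) (by norm_num)
    (by norm_num) (by omega : 4 * j < 4 * (j + 1))
  rw [neg_one_pow_four_mul, neg_one_pow_four_mul] at h
  norm_num at h ⊢
  exact h

/-- Consecutive approximants are distinct, so at most one of them equals `x / y`. -/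
lemma exists_int_approx_cbrtNine_ne (hj : 1 ≤ j) (x : ℤ) {y : ℤ} (hy : y ≠ 0) :
    ∃ P Q : ℤ, 0 < P ∧ P * x ≠ Q * y ∧
      (P : ℝ) ≤ 24 * (j + 1) * (4 * j + 5) * 143825112 ^ (j + 1) ∧
      |cbrtNine * P - Q| ≤ 2 * j / 12330 ^ j := by
  obtain ⟨P, Q, hP, hQ, hPpos, hPle, herr⟩ := exists_int_approx_cbrtNine hj
  obtain ⟨P', Q', hP', hQ', hPpos', hPle', herr'⟩ :=
    exists_int_approx_cbrtNine (j := j + 1) (by omega)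
  push_cast at hPle' herr'
  by_cases h : P * x = Q * y
  · refine ⟨P', Q', hPpos', fun h' ↦ padeSum_eight_mul_padeSum_neg_nine_ne j ?_,
      hPle'.trans_eq (by ring), herr'.trans ?_⟩
    · have hcross : Q * P' = Q' * P :=
        mul_left_cancel₀ hy (by linear_combination P * h' - P' * h)
      have hcross' : (Q : ℝ) * P' = Q' * P := by exact_mod_cast hcross
      rw [hP, hQ, hP', hQ'] at hcross'
      refine mul_left_cancel₀ (mul_pos (padeDenom_pos j) (padeDenom_pos (j + 1))).ne' ?_
      linear_combination hcross' / 2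
    · have hj' : (1 : ℝ) ≤ j := by exact_mod_cast hj
      rw [pow_succ', ← div_div]
      gcongr
      linarith
  · refine ⟨P, Q, hPpos, h, hPle.trans ?_, herr⟩
    gcongr <;> linarith

end CubeRoot

/-! ### Integers `x`, `y` with `x ^ 3 - 9 * y ^ 3` small -/

section SmallCubicForm

lemma three_mul_sq_mul_abs_le (x y : ℝ) :
    3 * y ^ 2 * |cbrtNine * y - x| ≤ |x ^ 3 - 9 * y ^ 3| := by
  have hfactor : x ^ 3 - 9 * y ^ 3 =
      -((cbrtNine * y) ^ 2 + cbrtNine * y * x + x ^ 2) * (cbrtNine * y - x) := by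
    linear_combination y ^ 3 * cbrtNine_pow_three
  have hquad : 3 * y ^ 2 ≤ (cbrtNine * y) ^ 2 + cbrtNine * y * x + x ^ 2 := by
    have hsq : 4 ≤ cbrtNine ^ 2 := by nlinarith [lt_cbrtNine]
    nlinarith [sq_nonneg (cbrtNine * y + 2 * x), mul_le_mul_of_nonneg_right hsq (sq_nonneg y)]
  rw [hfactor, abs_mul, abs_neg]
  gcongr
  exact hquad.trans (le_abs_self _)

/-- Two distinct fractions `x / y` and `Q / P` are at least `1 / |P * y|` apart, so `x / y` cannot
be close to `∛9` when `Q / P` is. -/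
lemma three_mul_sq_le_of_approx {x y P Q : ℤ} (hne : P * x ≠ Q * y)
    (happrox : 2 * |cbrtNine * P - Q| * |(y : ℝ)| ≤ 1) :
    3 * y ^ 2 ≤ 2 * |P| * |x ^ 3 - 9 * y ^ 3| := by
  have hgap : (1 : ℝ) ≤ |(P : ℝ) * x - Q * y| := by
    exact_mod_cast Int.one_le_abs (sub_ne_zero.2 hne)
  have htriangle : |(P : ℝ) * x - Q * y| ≤
      |cbrtNine * P - Q| * |(y : ℝ)| + |(P : ℝ)| * |cbrtNine * y - x| := by
    rw [← abs_mul, ← abs_mul,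
      show (P : ℝ) * x - Q * y = (cbrtNine * P - Q) * y - P * (cbrtNine * y - x) by ring]
    exact abs_sub _ _
  have hclose : 1 ≤ 2 * (|(P : ℝ)| * |cbrtNine * y - x|) := by linarith
  suffices (3 * y ^ 2 : ℝ) ≤ 2 * |(P : ℝ)| * |(x : ℝ) ^ 3 - 9 * y ^ 3| by exact_mod_cast this
  calc (3 * y ^ 2 : ℝ) = 3 * y ^ 2 * 1 := (mul_one _).symm
    _ ≤ 3 * y ^ 2 * (2 * (|(P : ℝ)| * |cbrtNine * y - x|)) := by gcongr
    _ = 2 * |(P : ℝ)| * (3 * y ^ 2 * |cbrtNine * y - x|) := by ring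
    _ ≤ 2 * |(P : ℝ)| * |(x : ℝ) ^ 3 - 9 * y ^ 3| := by
      gcongr
      exact three_mul_sq_mul_abs_le _ _

lemma three_mul_sq_le_of_pade {x y : ℤ} (hy : y ≠ 0) {j : ℕ} (hj : 1 ≤ j)
    (hyj : 4 * j * |y| ≤ 12330 ^ j) :
    3 * y ^ 2 ≤
      48 * (j + 1) * (4 * j + 5) * 143825112 ^ (j + 1) * |x ^ 3 - 9 * y ^ 3| := by
  obtain ⟨P, Q, hP, hne, hPle, herr⟩ := exists_int_approx_cbrtNine_ne hj x hy
  have hyj' : 4 * j * |(y : ℝ)| ≤ 12330 ^ j := by exact_mod_cast hyj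
  have happrox : 2 * |cbrtNine * P - Q| * |(y : ℝ)| ≤ 1 := by
    calc 2 * |cbrtNine * P - Q| * |(y : ℝ)| ≤ 2 * (2 * j / 12330 ^ j) * |(y : ℝ)| := by gcongr
      _ = 4 * j * |(y : ℝ)| / 12330 ^ j := by ring
      _ ≤ 1 := (div_le_one₀ (by positivity)).2 hyj'
  have hPle' : P ≤ 24 * (j + 1) * (4 * j + 5) * 143825112 ^ (j + 1) := by exact_mod_cast hPle
  calc 3 * y ^ 2 ≤ 2 * |P| * |x ^ 3 - 9 * y ^ 3| := three_mul_sq_le_of_approx hne happrox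
    _ ≤ 2 * (24 * (j + 1) * (4 * j + 5) * 143825112 ^ (j + 1)) * |x ^ 3 - 9 * y ^ 3| := by
      rw [abs_of_pos hP]
      gcongr
    _ = _ := by ring

lemma exists_pow_lt_mul_and_mul_le_pow {a y : ℕ} (ha : 4 ≤ a) (hy : a < 4 * y) :
    ∃ j, a ^ j < 4 * j * y ∧ 4 * (j + 1) * y ≤ a ^ (j + 1) := by
  have hex : ∃ j, 4 * (j + 1) * y ≤ a ^ (j + 1) := by
    refine ⟨y, ?_⟩
    calc 4 * (y + 1) * y ≤ 4 * 2 ^ y * 2 ^ y := by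
          gcongr
          exacts [Nat.lt_two_pow_self, Nat.lt_two_pow_self.le]
      _ = 4 ^ (y + 1) := by rw [pow_succ', mul_assoc, ← mul_pow]; norm_num
      _ ≤ a ^ (y + 1) := Nat.pow_le_pow_left ha _
  have hspec := Nat.find_spec hex
  cases hfind : Nat.find hex with
  | zero =>
    rw [hfind, zero_add, pow_one] at hspec
    omega
  | succ i =>
    rw [hfind] at hspec
    exact ⟨i + 1, not_le.1 (Nat.find_min hex (m := i) (by omega)), hspec⟩

lemma three_pow_le_of_growth {b n y : ℕ} (hgrowth : 13 ^ ((6 ^ b - 1) / 5) ≤ y)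
    (hy : y ≤ 12330 ^ n) (hn : 1 ≤ n) : 3 ^ (9 * b) ≤ (21 * n) ^ 6 := by
  have hexp : (6 ^ b - 1) / 5 ≤ 4 * n := by
    refine (Nat.pow_le_pow_iff_right (by norm_num : 1 < 13)).1 ((hgrowth.trans hy).trans ?_)
    rw [pow_mul]
    exact Nat.pow_le_pow_left (by norm_num) n
  have hdvd : 5 ∣ 6 ^ b - 1 := by simpa using Nat.sub_dvd_pow_sub_pow 6 1 b
  calc 3 ^ (9 * b) = 19683 ^ b := by rw [pow_mul]; norm_num
    _ ≤ 46656 ^ b := Nat.pow_le_pow_left (by norm_num) _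
    _ = (6 ^ b) ^ 6 := by rw [← pow_mul, mul_comm, pow_mul]; norm_num
    _ ≤ (21 * n) ^ 6 := Nat.pow_le_pow_left (by omega) _

lemma mul_pow_ten_mul_pow_le {J : ℕ} (hJ : 2690 ≤ J) :
    1280 * 729 * 21 ^ 6 * J ^ 10 * 143825112 ^ (J + 2) ≤ 152028900 ^ J := by
  induction J, hJ using Nat.le_induction with
  | base => decide +kernel
  | succ J hJ ih =>
    have hratio : (J + 1) ^ 10 * 143825112 ≤ J ^ 10 * 152028900 := by
      refine Nat.le_of_mul_le_mul_left ?_ (show 0 < 2690 ^ 10 by norm_num)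
      calc 2690 ^ 10 * ((J + 1) ^ 10 * 143825112) = ((J + 1) * 2690) ^ 10 * 143825112 := by ring
        _ ≤ (2691 * J) ^ 10 * 143825112 := by gcongr ?_ ^ 10 * _; omega
        _ = J ^ 10 * (2691 ^ 10 * 143825112) := by ring
        _ ≤ J ^ 10 * (2690 ^ 10 * 152028900) := Nat.mul_le_mul_left _ (by norm_num)
        _ = 2690 ^ 10 * (J ^ 10 * 152028900) := by ring
    generalize 1280 * 729 * 21 ^ 6 = C at ih ⊢
    calc C * (J + 1) ^ 10 * 143825112 ^ (J + 1 + 2)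
        = C * ((J + 1) ^ 10 * 143825112) * 143825112 ^ (J + 2) := by
          rw [add_right_comm, pow_succ _ (J + 2)]; ring
      _ ≤ C * (J ^ 10 * 152028900) * 143825112 ^ (J + 2) := by gcongr
      _ = C * J ^ 10 * 143825112 ^ (J + 2) * 152028900 := by ring
      _ ≤ 152028900 ^ J * 152028900 := by gcongr
      _ = 152028900 ^ (J + 1) := (pow_succ _ _).symm

lemma mul_mul_pow_six_le {J : ℤ} (hJ : 2690 ≤ J) :
    (J + 2) * (4 * J + 9) * (J + 1) ^ 6 ≤ 5 * J ^ 8 := by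
  have hlin : 100 * (J + 2) ≤ 101 * J := by linarith
  have hlin' : 100 * (4 * J + 9) ≤ 404 * J := by linarith
  have hpow : (100 * (J + 1)) ^ 6 ≤ (101 * J) ^ 6 := by gcongr ?_ ^ 6; linarith
  have hprod := mul_le_mul (mul_le_mul hlin hlin' (by linarith) (by linarith)) hpow
    (by positivity) (by positivity)
  nlinarith [pow_pos (by linarith : 0 < J) 8]

lemma pow_lt_mul_abs_cubic_form {x y : ℤ} {J : ℕ} (hlow : 12330 ^ J < 4 * J * |y|)
    (hhigh : 4 * (J + 1) * |y| ≤ 12330 ^ (J + 1)) :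
    (152028900 : ℤ) ^ J <
      256 * (J : ℤ) ^ 2 * 143825112 ^ (J + 2) * (((J : ℤ) + 2) * (4 * J + 9)) *
        |x ^ 3 - 9 * y ^ 3| := by
  have hy : y ≠ 0 := by
    rintro rfl
    rw [abs_zero, mul_zero] at hlow
    exact hlow.not_ge (by positivity)
  have hpade := three_mul_sq_le_of_pade (x := x) hy (j := J + 1) (by omega)
    (by exact_mod_cast hhigh)
  push_cast [add_assoc] at hpade
  calc (152028900 : ℤ) ^ J = (12330 ^ J) ^ 2 := by rw [← pow_mul, mul_comm, pow_mul]; norm_num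
    _ < (4 * J * |y|) ^ 2 := by gcongr
    _ = 16 * J ^ 2 * y ^ 2 := by rw [mul_pow, sq_abs]; ring
    _ ≤ _ := by linarith [mul_le_mul_of_nonneg_left hpade (sq_nonneg (J : ℤ))]

/-- `N` is a variable so that elaboration never evaluates `12330 ^ 2691`. -/
lemma abs_lt_pow_of_growth {b N : ℕ} (hN : 2691 ≤ N) {x y : ℤ}
    (hform : |x ^ 3 - 9 * y ^ 3| < 3 ^ (9 * b + 6))
    (hgrowth : 13 ^ ((6 ^ b - 1) / 5) ≤ |y|) : |y| < 12330 ^ N := by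
  by_contra! hyN
  have hy : 12330 ≤ |y| := (le_self_pow₀ (by norm_num) (by omega)).trans hyN
  obtain ⟨J, hlow, hhigh⟩ := exists_pow_lt_mul_and_mul_le_pow (a := 12330) (y := y.natAbs)
    (by norm_num) (by rw [Int.abs_eq_natAbs] at hy; omega)
  have hle : y.natAbs ≤ 12330 ^ (J + 1) := le_trans (Nat.le_mul_of_pos_left _ (by omega)) hhigh
  have hNJ : N ≤ J + 1 := by
    refine (Nat.pow_le_pow_iff_right (by norm_num : 1 < 12330)).1 (le_trans ?_ hle)
    zify
    exact hyN
  have hthree : (3 : ℤ) ^ (9 * b) ≤ (21 * (J + 1)) ^ 6 := by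
    exact_mod_cast three_pow_le_of_growth (by zify; exact hgrowth) hle (by omega)
  have hform' : |x ^ 3 - 9 * y ^ 3| ≤ 729 * (21 * ((J : ℤ) + 1)) ^ 6 := by
    rw [pow_add] at hform
    linarith
  zify at hlow hhigh
  refine lt_irrefl ((152028900 : ℤ) ^ J) ?_
  calc (152028900 : ℤ) ^ J
    _ < 256 * (J : ℤ) ^ 2 * 143825112 ^ (J + 2) * (((J : ℤ) + 2) * (4 * J + 9)) *
        |x ^ 3 - 9 * y ^ 3| := pow_lt_mul_abs_cubic_form hlow hhigh
    _ ≤ 256 * (J : ℤ) ^ 2 * 143825112 ^ (J + 2) * ((J + 2) * (4 * J + 9)) *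
        (729 * (21 * (J + 1)) ^ 6) := by gcongr
    _ = 256 * (J : ℤ) ^ 2 * 143825112 ^ (J + 2) *
        (729 * 21 ^ 6 * ((J + 2) * (4 * J + 9) * (J + 1) ^ 6)) := by ring
    _ ≤ 256 * (J : ℤ) ^ 2 * 143825112 ^ (J + 2) * (729 * 21 ^ 6 * (5 * J ^ 8)) := by
      gcongr _ * (_ * ?_)
      exact mul_mul_pow_six_le (by omega)
    _ = 1280 * 729 * 21 ^ 6 * (J : ℤ) ^ 10 * 143825112 ^ (J + 2) := by ring
    _ ≤ 152028900 ^ J := by exact_mod_cast mul_pow_ten_mul_pow_le (by omega)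

end SmallCubicForm

/-! ### Excluding windows by convergents of the cube root of `9` -/

section Windows

/-- State of the Euclidean algorithm on a fraction: two consecutive remainders `a`, `b` and two
consecutive convergents `p / q`, `p' / q'`. -/
structure EuclidState where
  (a b q q' p p' : ℕ)

/-- `f n`, written so that kernel reduction computes the numeral `n` before passing it to `f`;
otherwise the Euclidean algorithm would build up nested unevaluated expressions. -/
def applyEvaluated {α : Type*} (f : ℕ → α) (n : ℕ) : α :=
  Nat.casesOn n (f 0) fun k ↦ f (k + 1)

/-- One step of the Euclidean algorithm, doing nothing once the denominator has reached `bound`. -/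
def EuclidState.step (bound : ℕ) : EuclidState → EuclidState
  | ⟨a, b, q, q', p, p'⟩ =>
    if bound ≤ q' then ⟨a, b, q, q', p, p'⟩
    else
      (a % b) |> applyEvaluated fun r ↦
      (q + a / b * q') |> applyEvaluated fun q'' ↦
      (p + a / b * p') |> applyEvaluated fun p'' ↦
        ⟨b, r, q', q'', p', p''⟩

/-- `2 ^ d` steps of the Euclidean algorithm; halving keeps the recursion depth small. -/
def EuclidState.run (bound : ℕ) : ℕ → EuclidState → EuclidState
  | 0, s => s.step bound
  | d + 1, s =>
    match run bound d s with
    | ⟨a, b, q, q', p, p'⟩ => run bound d ⟨a, b, q, q', p, p'⟩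

/-- The sufficient condition on a fraction `Q / P` approximating `∛9` for excluding all `y` with
`3 ^ lo ≤ |y| < 3 ^ hi` in `three_pow_le_abs_of_isWindowCertificate`. -/
def IsWindowCertificate (P Q lo hi : ℕ) : Prop :=
  P.Coprime Q ∧ 3 ^ hi ≤ P ∧ 2 * 3 ^ hi * (Q ^ 3 - 9 * P ^ 3 : ℤ).natAbs ≤ 3 * P ^ 2 ∧
    ((2 * P) ^ 25 ≤ 3 ^ 49 * (3 ^ lo) ^ 44 ∨ 2 * P * 3 ^ 60 ≤ 3 * (3 ^ lo) ^ 2)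

instance (P Q lo hi : ℕ) : Decidable (IsWindowCertificate P Q lo hi) :=
  inferInstanceAs (Decidable (_ ∧ _))

/-- Checks a chain of adjacent windows `[3 ^ lo, 3 ^ hi)`, starting from an approximation `Q / P`
to `∛9`. Each further certificate is the first convergent with denominator at least `3 ^ hi` of the
Newton iterate `(2 * Q ^ 3 + 9 * P ^ 3) / (3 * P * Q ^ 2)` of its predecessor `Q / P`. -/
def checkWindows (P Q lo : ℕ) : List ℕ → Bool
  | [] => true
  | hi :: his =>
    match EuclidState.run (3 ^ hi) (hi.log2 + 1)
      ⟨2 * Q ^ 3 + 9 * P ^ 3, 3 * P * Q ^ 2, 1, 0, 0, 1⟩ with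
    | ⟨_, _, _, P', _, Q'⟩ => decide (IsWindowCertificate P' Q' lo hi) && checkWindows P' Q' hi his

variable {x y : ℤ} {P Q lo hi : ℕ}

lemma three_mul_sq_le_of_isWindowCertificate (hc : IsWindowCertificate P Q lo hi) (hy : y ≠ 0)
    (hhi : |y| < 3 ^ hi) : 3 * y ^ 2 ≤ 2 * (P : ℤ) * |x ^ 3 - 9 * y ^ 3| := by
  obtain ⟨hcop, hP, herr, -⟩ := hc
  have hyP : |y| < P := hhi.trans_le (by exact_mod_cast hP)
  have hne : (P : ℤ) * x ≠ Q * y := fun h ↦ hyP.not_ge <| by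
    have hdvd : (P : ℤ) ∣ y :=
      (Nat.isCoprime_iff_coprime.2 hcop).dvd_of_dvd_mul_left ⟨x, h.symm⟩
    exact Int.le_of_dvd (abs_pos.2 hy) ((dvd_abs _ _).2 hdvd)
  have hPpos : (0 : ℝ) < 3 * P ^ 2 := by
    have : (0 : ℝ) < P := by exact_mod_cast (abs_nonneg y).trans_lt hyP
    positivity
  have herr' : (2 * 3 ^ hi : ℝ) * |(Q : ℝ) ^ 3 - 9 * P ^ 3| ≤ 3 * P ^ 2 := by
    zify at herr
    exact_mod_cast herr
  have hhi' : |(y : ℝ)| ≤ 3 ^ hi := by exact_mod_cast hhi.le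
  have happrox : 2 * |cbrtNine * (P : ℤ) - (Q : ℤ)| * |(y : ℝ)| ≤ 1 := by
    refine le_of_mul_le_mul_left ?_ hPpos
    push_cast
    calc 3 * (P : ℝ) ^ 2 * (2 * |cbrtNine * P - Q| * |(y : ℝ)|)
        = 2 * |(y : ℝ)| * (3 * P ^ 2 * |cbrtNine * P - Q|) := by ring
      _ ≤ 2 * 3 ^ hi * |(Q : ℝ) ^ 3 - 9 * P ^ 3| := by
        gcongr
        exact three_mul_sq_mul_abs_le _ _
      _ ≤ 3 * P ^ 2 * 1 := by rwa [mul_one]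
  simpa using three_mul_sq_le_of_approx hne happrox

lemma three_pow_le_abs_of_isWindowCertificate (hc : IsWindowCertificate P Q lo hi)
    (hpow : |x ^ 3 - 9 * y ^ 3| ^ 25 * 3 ^ 24 < y ^ 6) (hform : |x ^ 3 - 9 * y ^ 3| < 3 ^ 60)
    (hlo : 3 ^ lo ≤ |y|) : 3 ^ hi ≤ |y| := by
  by_contra! hhi
  have hy : 0 < |y| := lt_of_lt_of_le (by positivity) hlo
  have hwindow := three_mul_sq_le_of_isWindowCertificate (x := x) hc (abs_pos.1 hy) hhi
  obtain ⟨-, hP, -, hbound⟩ := hc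
  have hPpos : (0 : ℤ) < P := by exact_mod_cast (Nat.pow_pos (by norm_num)).trans_le hP
  generalize |x ^ 3 - 9 * y ^ 3| = m at *
  rcases hbound with hbound | hbound
  · have hbound' : (2 * P : ℤ) ^ 25 ≤ 3 ^ 49 * (3 ^ lo) ^ 44 := by exact_mod_cast hbound
    refine lt_irrefl ((3 * y ^ 2) ^ 25 * 3 ^ 24) ?_
    calc (3 * y ^ 2) ^ 25 * 3 ^ 24 ≤ (2 * P * m) ^ 25 * 3 ^ 24 := by gcongr
      _ = (2 * P) ^ 25 * (m ^ 25 * 3 ^ 24) := by ring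
      _ < (2 * P) ^ 25 * y ^ 6 := by gcongr
      _ ≤ 3 ^ 49 * |y| ^ 44 * y ^ 6 := by
        gcongr
        exact hbound'.trans (by gcongr)
      _ = (3 * y ^ 2) ^ 25 * 3 ^ 24 := by
        rw [Even.pow_abs (by decide)]
        ring
  · have hbound' : (2 * P * 3 ^ 60 : ℤ) ≤ 3 * (3 ^ lo) ^ 2 := by exact_mod_cast hbound
    refine lt_irrefl (3 * y ^ 2) ?_
    calc 3 * y ^ 2 ≤ 2 * P * m := hwindow
      _ < 2 * P * 3 ^ 60 := by gcongr
      _ ≤ 3 * |y| ^ 2 := hbound'.trans (by gcongr)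
      _ = 3 * y ^ 2 := by rw [sq_abs]

lemma three_pow_le_abs_of_checkWindows {his : List ℕ} (hcheck : checkWindows P Q lo his)
    (hpow : |x ^ 3 - 9 * y ^ 3| ^ 25 * 3 ^ 24 < y ^ 6) (hform : |x ^ 3 - 9 * y ^ 3| < 3 ^ 60)
    (hlo : 3 ^ lo ≤ |y|) : ∀ hi ∈ his, 3 ^ hi ≤ |y| := by
  induction his generalizing P Q lo with
  | nil => simp
  | cons hi his ih =>
    rw [checkWindows, Bool.and_eq_true, decide_eq_true_eq] at hcheck
    have hhi := three_pow_le_abs_of_isWindowCertificate hcheck.1 hpow hform hlo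
    exact List.forall_mem_cons.2 ⟨hhi, ih hcheck.2 hhi⟩

/-- `K` is a variable so that elaboration never evaluates `3 ^ 23074`. -/
lemma three_pow_le_abs_of_cubic_form_lt {K : ℕ} (hK : K = 23074)
    (hpow : |x ^ 3 - 9 * y ^ 3| ^ 25 * 3 ^ 24 < y ^ 6) (hform : |x ^ 3 - 9 * y ^ 3| < 3 ^ 60)
    (hlo : 3 ^ 29 ≤ |y|) : 3 ^ K ≤ |y| := by
  have hcheck : checkWindows (10 ^ 22) 20800838230519041145300 29
      [40, 70, 122, 212, 371, 680, 1298, 2535, 5005, 9947, 19834, 23074] := by decide +kernel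
  exact three_pow_le_abs_of_checkWindows hcheck hpow hform hlo K (by simp [hK])

end Windows

/-! ### Eisenstein integers -/

/-- The ring of Eisenstein integers `ℤ[ω]`, where `ω ^ 2 = -1 - ω`. -/
abbrev EisensteinInt := QuadraticAlgebra ℤ (-1) (-1)

namespace EisensteinInt

open QuadraticAlgebra

lemma norm_eq (z : EisensteinInt) : z.norm = z.re ^ 2 - z.re * z.im + z.im ^ 2 := by
  rw [norm_def]
  ring

lemma norm_nonneg (z : EisensteinInt) : 0 ≤ z.norm := by
  rw [norm_eq]
  nlinarith [sq_nonneg (z.re - z.im), sq_nonneg z.re, sq_nonneg z.im]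

lemma norm_pos {z : EisensteinInt} (hz : z ≠ 0) : 0 < z.norm := by
  refine (norm_nonneg z).lt_of_ne' fun h ↦ hz ?_
  rw [norm_eq] at h
  have hre : z.re ^ 2 = 0 := by nlinarith [sq_nonneg (z.re - 2 * z.im), sq_nonneg z.re]
  have him : z.im ^ 2 = 0 := by nlinarith [sq_nonneg (z.im - 2 * z.re), sq_nonneg z.im]
  exact QuadraticAlgebra.ext (sq_eq_zero_iff.1 hre) (sq_eq_zero_iff.1 him)

/-- A lattice point nearest to `x / y` in both coordinates (and `0` if `y = 0`). -/
def quotient (x y : EisensteinInt) : EisensteinInt :=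
  ⟨round ((x * star y).re / y.norm : ℚ), round ((x * star y).im / y.norm : ℚ)⟩

lemma two_mul_abs_sub_mul_round_le (p : ℤ) {n : ℤ} (hn : 0 < n) :
    2 * |p - n * round (p / n : ℚ)| ≤ n := by
  have hn' : (0 : ℚ) < n := by exact_mod_cast hn
  have hround := mul_le_mul_of_nonneg_left (abs_sub_round (p / n : ℚ)) hn'.le
  rw [← abs_of_pos hn', ← abs_mul, mul_sub, abs_of_pos hn', mul_div_cancel₀ _ hn'.ne'] at hround
  have : (2 * |(p : ℚ) - n * round (p / n : ℚ)|) ≤ n := by linarith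
  exact_mod_cast this

lemma sub_mul_quotient_mul_star (x y : EisensteinInt) :
    (x - y * quotient x y) * star y =
      ⟨(x * star y).re - y.norm * (quotient x y).re,
        (x * star y).im - y.norm * (quotient x y).im⟩ := by
  rw [norm_eq]
  ext
  · simp only [re_mul, im_mul, re_sub, im_sub, re_star, im_star]
    ring
  · simp only [re_mul, im_mul, re_sub, im_sub, re_star, im_star]
    ring

lemma norm_sub_mul_quotient_lt (x : EisensteinInt) {y : EisensteinInt} (hy : y ≠ 0) :
    (x - y * quotient x y).norm < y.norm := by
  have hpos := norm_pos hy
  have hre : 2 * |(x * star y).re - y.norm * (quotient x y).re| ≤ y.norm :=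
    two_mul_abs_sub_mul_round_le _ hpos
  have him : 2 * |(x * star y).im - y.norm * (quotient x y).im| ≤ y.norm :=
    two_mul_abs_sub_mul_round_le _ hpos
  have hnorm := congrArg QuadraticAlgebra.norm (sub_mul_quotient_mul_star x y)
  rw [map_mul, QuadraticAlgebra.norm_star] at hnorm
  generalize (x * star y).re - y.norm * (quotient x y).re = e at *
  generalize (x * star y).im - y.norm * (quotient x y).im = f at *
  have he := pow_le_pow_left₀ (by positivity) hre 2
  have hf := pow_le_pow_left₀ (by positivity) him 2
  rw [mul_pow, sq_abs] at he hf
  refine lt_of_mul_lt_mul_right ?_ hpos.le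
  rw [hnorm, norm_eq]
  nlinarith [sq_nonneg (e + f)]

instance : EuclideanDomain EisensteinInt where
  quotient := quotient
  remainder x y := x - y * quotient x y
  quotient_zero x := by simp [quotient, QuadraticAlgebra.ext_iff]
  quotient_mul_add_remainder_eq x y := by ring
  r x y := x.norm.natAbs < y.norm.natAbs
  r_wellFounded := (measure fun x : EisensteinInt ↦ x.norm.natAbs).wf
  remainder_lt x y hy :=
    Int.natAbs_lt_natAbs_of_nonneg_of_lt (norm_nonneg _) (norm_sub_mul_quotient_lt x hy)
  mul_left_not_lt x y hy := by
    rw [map_mul, Int.natAbs_mul, not_lt]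
    exact Nat.le_mul_of_pos_right _ (Int.natAbs_pos.2 (norm_pos hy).ne')

/-- The difference of `z` and its conjugate is `z.im * √-3`, where `√-3 = 1 + 2 * ω`. -/
lemma isCoprime_star {z : EisensteinInt} (h : IsCoprime z.norm (3 * z.im)) :
    IsCoprime z (star z) := by
  obtain ⟨p, q, hpq⟩ := h
  rw [norm_eq] at hpq
  refine ⟨p • star z - q • ⟨1, 2⟩, q • ⟨1, 2⟩, ?_⟩
  ext
  · simp only [re_add, re_mul, re_sub, im_sub, re_smul, im_smul, re_star, im_star, re_one,
      smul_eq_mul]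
    linear_combination hpq
  · simp only [im_add, im_mul, re_sub, im_sub, re_smul, im_smul, re_star, im_star, im_one,
      smul_eq_mul]
    ring

lemma eq_of_norm_eq_one {z : EisensteinInt} (h : z.norm = 1) :
    z = 1 ∨ z = -1 ∨ z = ω ∨ z = -ω ∨ z = ω ^ 2 ∨ z = -ω ^ 2 := by
  obtain ⟨u, v⟩ := z
  rw [norm_eq] at h
  dsimp only at h
  have hu : |u| ≤ 1 := abs_le_one_iff_mul_self_le_one.2 (by nlinarith [sq_nonneg (u - 2 * v)])
  have hv : |v| ≤ 1 := abs_le_one_iff_mul_self_le_one.2 (by nlinarith [sq_nonneg (v - 2 * u)])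
  rw [abs_le] at hu hv
  obtain ⟨hu₁, hu₂⟩ := hu
  obtain ⟨hv₁, hv₂⟩ := hv
  interval_cases u <;> interval_cases v <;> simp_all [QuadraticAlgebra.ext_iff, sq]

lemma eq_pow_three_or_of_norm_eq_pow_three {z : EisensteinInt} {d : ℤ}
    (hcop : IsCoprime z (star z)) (hnorm : z.norm = d ^ 3) :
    ∃ γ : EisensteinInt, γ.norm = d ∧ (z = γ ^ 3 ∨ z = ω * γ ^ 3 ∨ z = ω ^ 2 * γ ^ 3) := by
  have hmul : z * star z = (d : EisensteinInt) ^ 3 := by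
    rw [← algebraMap_norm_eq_mul_star, hnorm, map_pow, algebraMap_int_eq, eq_intCast]
  obtain ⟨γ, ε, hε⟩ := exists_associated_pow_of_mul_eq_pow' hcop hmul
  have hεnorm : (ε : EisensteinInt).norm = 1 :=
    (Int.isUnit_iff.1 (ε.isUnit.map QuadraticAlgebra.norm)).resolve_right
      fun h ↦ absurd (norm_nonneg (ε : EisensteinInt)) (by rw [h]; decide)
  have hγ : γ.norm = d := by
    refine (Odd.strictMono_pow (n := 3) (by decide)).injective ?_
    rw [← hnorm, ← hε, map_mul, map_pow, hεnorm, mul_one]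
  rw [mul_comm] at hε
  rcases eq_of_norm_eq_one hεnorm with h | h | h | h | h | h <;> rw [h] at hε
  · exact ⟨γ, hγ, .inl (by rw [← hε]; ring)⟩
  · exact ⟨-γ, by rwa [QuadraticAlgebra.norm_neg], .inl (by rw [← hε]; ring)⟩
  · exact ⟨γ, hγ, .inr (.inl hε.symm)⟩
  · exact ⟨-γ, by rwa [QuadraticAlgebra.norm_neg], .inr (.inl (by rw [← hε]; ring))⟩
  · exact ⟨γ, hγ, .inr (.inr hε.symm)⟩
  · exact ⟨-γ, by rwa [QuadraticAlgebra.norm_neg], .inr (.inr (by rw [← hε]; ring))⟩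

lemma im_pow_three (z : EisensteinInt) : (z ^ 3).im = 3 * (z.re * z.im * (z.re - z.im)) := by
  simp only [pow_succ, pow_zero, one_mul, im_mul, re_mul]
  ring

/-- The imaginary part of a cube is divisible by `3`, which rules out the units `ω` and `ω ^ 2`. -/
lemma exists_eq_pow_three {z : EisensteinInt} {d : ℤ} (hcop : IsCoprime z (star z))
    (hnorm : z.norm = d ^ 3) (him : 3 ∣ z.im) (hre : ¬ 3 ∣ z.re) :
    ∃ γ : EisensteinInt, γ.norm = d ∧ z = γ ^ 3 := by
  obtain ⟨γ, hγ, rfl | rfl | rfl⟩ := eq_pow_three_or_of_norm_eq_pow_three hcop hnorm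
  · exact ⟨γ, hγ, rfl⟩
  · refine absurd ?_ hre
    simp [im_pow_three]
  · refine absurd ?_ hre
    have := im_pow_three γ
    simp only [sq, im_mul, re_mul, omega_re, omega_im] at him ⊢
    omega

end EisensteinInt

/-! ### 3-descent on `x ^ 3 + y ^ 3 = 9 * z ^ 3` -/

section Descent

lemma isCoprime_three_of_not_dvd {n : ℤ} (h : ¬ 3 ∣ n) : IsCoprime 3 n :=
  Int.prime_three.coprime_iff_not_dvd.2 h

lemma not_three_dvd_of_isCoprime {u v : ℤ} (h : IsCoprime u v) (hu : 3 ∣ u) : ¬ 3 ∣ v :=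
  fun hv ↦ Int.prime_three.not_isUnit (h.isUnit_of_dvd' hu hv)

lemma pow_three_injective : Function.Injective fun n : ℤ ↦ n ^ 3 :=
  (Odd.strictMono_pow (by decide)).injective

/-- The left side of `h` is the norm of `2 * f - y + f * ω`. -/
lemma exists_eq_of_quadratic_eq_pow_three {f y d : ℤ} (hcop : IsCoprime f y) (hf : 3 ∣ f)
    (h : 3 * f ^ 2 - 3 * f * y + y ^ 2 = d ^ 3) :
    ∃ r s : ℤ, f = 3 * (r * s * (r - s)) ∧ d = r ^ 2 - r * s + s ^ 2 := by
  have hy : ¬ 3 ∣ y := not_three_dvd_of_isCoprime hcop hf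
  set z : EisensteinInt := ⟨2 * f - y, f⟩
  have hnorm : z.norm = 3 * f ^ 2 - 3 * f * y + y ^ 2 := by
    rw [EisensteinInt.norm_eq]
    ring
  have hzcop : IsCoprime z.norm (3 * z.im) := by
    have h3y : IsCoprime (y ^ 2) (3 * f) :=
      ((isCoprime_three_of_not_dvd hy).symm.mul_right hcop.symm).pow_left
    rw [hnorm, show 3 * f ^ 2 - 3 * f * y + y ^ 2 = y ^ 2 + 3 * f * (f - y) by ring]
    exact h3y.add_mul_left_left _
  have hre : ¬ 3 ∣ z.re := by
    change ¬ 3 ∣ 2 * f - y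
    omega
  obtain ⟨γ, hγ, hcube⟩ := EisensteinInt.exists_eq_pow_three
    (EisensteinInt.isCoprime_star hzcop) (hnorm.trans h) hf hre
  refine ⟨γ.re, γ.im, ?_, by rw [← hγ, EisensteinInt.norm_eq]⟩
  rw [← EisensteinInt.im_pow_three, ← hcube]

lemma isCoprime_add_right {u v : ℤ} (h : IsCoprime u v) : IsCoprime u (u + v) := by
  simpa using h.mul_add_left_right 1

lemma exists_pow_three_add_pow_three_of_three_dvd_add {u v k : ℤ} (huv : IsCoprime u v)
    (h3 : 3 ∣ u + v) (h : u * v * (u + v) = 9 * k ^ 3) :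
    ∃ A B C : ℤ, IsCoprime A B ∧ A ^ 3 + B ^ 3 = 9 * C ^ 3 ∧ k = A * B * C := by
  have hodd : Odd 3 := by decide
  have huw : IsCoprime u (u + v) := isCoprime_add_right huv
  have hvw : IsCoprime v (u + v) := add_comm v u ▸ isCoprime_add_right huv.symm
  have h9 : IsCoprime (3 ^ 2) (u * v) := IsCoprime.pow_left <|
    (isCoprime_three_of_not_dvd (not_three_dvd_of_isCoprime huw.symm h3)).mul_right
      (isCoprime_three_of_not_dvd (not_three_dvd_of_isCoprime hvw.symm h3))
  obtain ⟨t, ht⟩ : 3 ^ 2 ∣ u + v := h9.dvd_of_dvd_mul_left ⟨k ^ 3, h⟩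
  rw [ht] at huw hvw h
  obtain ⟨⟨A, rfl⟩, D, hD⟩ := Int.eq_pow_of_mul_eq_pow_odd
    (huv.mul_right huw.of_mul_right_right) hodd (show u * (v * t) = k ^ 3 by linarith)
  obtain ⟨⟨B, rfl⟩, C, rfl⟩ := Int.eq_pow_of_mul_eq_pow_odd hvw.of_mul_right_right hodd hD
  refine ⟨A, B, C, (IsCoprime.pow_iff (by norm_num) (by norm_num)).1 huv, by linarith, ?_⟩
  refine pow_three_injective ?_
  dsimp only
  linarith

lemma exists_pow_three_add_pow_three {u v k : ℤ} (huv : IsCoprime u v)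
    (h : u * v * (u + v) = 9 * k ^ 3) :
    ∃ A B C : ℤ, IsCoprime A B ∧ A ^ 3 + B ^ 3 = 9 * C ^ 3 ∧ k = A * B * C := by
  have h3 : 3 ∣ u * v * (u + v) := ⟨3 * k ^ 3, by linarith⟩
  rcases Int.prime_three.dvd_or_dvd h3 with h3 | h3
  · rcases Int.prime_three.dvd_or_dvd h3 with h3 | h3
    · exact exists_pow_three_add_pow_three_of_three_dvd_add (u := v) (v := -(v + u))
        (isCoprime_add_right huv.symm).neg_right (by simpa using h3) (by linear_combination h)
    · exact exists_pow_three_add_pow_three_of_three_dvd_add (u := u) (v := -(u + v))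
        (isCoprime_add_right huv).neg_right (by simpa using h3) (by linear_combination h)
  · exact exists_pow_three_add_pow_three_of_three_dvd_add huv h3 h

variable {x y z : ℤ}

lemma three_dvd_add_of_pow_three_add (h : x ^ 3 + y ^ 3 = 9 * z ^ 3) : 3 ∣ x + y :=
  Int.prime_three.dvd_of_dvd_pow (n := 3) ⟨3 * z ^ 3 + x * y * (x + y), by linear_combination h⟩

lemma not_three_dvd_mul_of_pow_three_add (hcop : IsCoprime x y) (h : x ^ 3 + y ^ 3 = 9 * z ^ 3) :
    ¬ 3 ∣ x * y := by
  have hadd := three_dvd_add_of_pow_three_add h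
  intro hmul
  rcases Int.prime_three.dvd_or_dvd hmul with h3 | h3
  · exact not_three_dvd_of_isCoprime hcop h3 ((dvd_add_right h3).1 hadd)
  · exact not_three_dvd_of_isCoprime hcop.symm h3 ((dvd_add_left h3).1 hadd)

/-- `X` comes from `x + y = 3 * X ^ 3`. -/
lemma exists_quadratic_eq_pow_three (hcop : IsCoprime x y) (h : x ^ 3 + y ^ 3 = 9 * z ^ 3) :
    ∃ X d : ℤ, IsCoprime (X ^ 3) y ∧ IsCoprime (X ^ 3) (d ^ 3) ∧ z = X * d ∧
      3 * (X ^ 3) ^ 2 - 3 * X ^ 3 * y + y ^ 2 = d ^ 3 := by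
  obtain ⟨f, hf⟩ := three_dvd_add_of_pow_three_add h
  obtain rfl : x = 3 * f - y := by linarith
  have hfactor : f * (3 * f ^ 2 - 3 * f * y + y ^ 2) = z ^ 3 := by linarith
  have hfy : IsCoprime f y := by
    obtain ⟨p, q, hpq⟩ := hcop
    exact ⟨3 * p, q - p, by linear_combination hpq⟩
  have hfq : IsCoprime f (3 * f ^ 2 - 3 * f * y + y ^ 2) := by
    rw [show 3 * f ^ 2 - 3 * f * y + y ^ 2 = y ^ 2 + f * (3 * f - 3 * y) by ring]
    exact hfy.pow_right.add_mul_left_right _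
  obtain ⟨⟨X, rfl⟩, d, hd⟩ := Int.eq_pow_of_mul_eq_pow_odd hfq (by decide) hfactor
  refine ⟨X, d, hfy, hd ▸ hfq, pow_three_injective ?_, hd⟩
  dsimp only
  rw [← hfactor, hd, mul_pow]

lemma sq_le_two_mul_of_quadratic_eq_pow_three {X d : ℤ}
    (h : 3 * (X ^ 3) ^ 2 - 3 * X ^ 3 * y + y ^ 2 = d ^ 3) : X ^ 2 ≤ 2 * d := by
  refine (Odd.strictMono_pow (n := 3) (by decide)).le_iff_le.1 ?_
  nlinarith [sq_nonneg (3 * X ^ 3 - 2 * y), sq_nonneg (X ^ 3)]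

lemma exists_descent (hcop : IsCoprime x y) (h : x ^ 3 + y ^ 3 = 9 * z ^ 3) (hz : 3 ∣ z) :
    ∃ A B C d : ℤ, IsCoprime A B ∧ A ^ 3 + B ^ 3 = 9 * C ^ 3 ∧ ¬ 3 ∣ d ∧
      z = 3 * (A * B * C) * d ∧ (3 * (A * B * C)) ^ 2 ≤ 2 * d := by
  obtain ⟨X, d, hXy, hXd, rfl, hquad⟩ := exists_quadratic_eq_pow_three hcop h
  have hd : ¬ 3 ∣ d := by
    intro ⟨e, he⟩
    refine not_three_dvd_mul_of_pow_three_add hcop h (dvd_mul_of_dvd_right ?_ x)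
    refine Int.prime_three.dvd_of_dvd_pow (n := 2) ⟨9 * e ^ 3 - (X ^ 3) ^ 2 + X ^ 3 * y, ?_⟩
    rw [he] at hquad
    linear_combination hquad
  obtain ⟨k, rfl⟩ := (Int.prime_three.dvd_or_dvd hz).resolve_right hd
  obtain ⟨r, s, hrs, rfl⟩ := exists_eq_of_quadratic_eq_pow_three hXy
    (dvd_pow (dvd_mul_right 3 k) three_ne_zero) hquad
  have hcop_rs : IsCoprime r s := by
    obtain ⟨p, q, hpq⟩ := IsCoprime.of_isCoprime_of_dvd_right hXd (dvd_pow_self _ three_ne_zero)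
    rw [hrs] at hpq
    exact ⟨q * (r - s) + p * 3 * s * (r - s), q * s, by linear_combination hpq⟩
  obtain ⟨A, B, C, hAB, hABC, rfl⟩ := exists_pow_three_add_pow_three (u := -r) (v := s) (k := k)
    hcop_rs.neg_left (by linarith)
  exact ⟨A, B, C, _, hAB, hABC, hd, rfl, sq_le_two_mul_of_quadratic_eq_pow_three hquad⟩

lemma abs_le_abs_mul_of_pow_three_add (hx : x ≠ 0) (hy : y ≠ 0) (h : x ^ 3 + y ^ 3 = 9 * z ^ 3) :
    |z| ≤ |x * y| := by
  by_contra! hlt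
  rw [abs_mul] at hlt
  have hx1 := Int.one_le_abs hx
  have hy1 := Int.one_le_abs hy
  have hxz : |x| ≤ |z| := by nlinarith
  have hyz : |y| ≤ |z| := by nlinarith
  have hz : 0 < |z| := by linarith
  refine lt_irrefl (9 * |z| ^ 3) ?_
  calc 9 * |z| ^ 3 = |x ^ 3 + y ^ 3| := by rw [h, abs_mul, abs_pow, Nat.abs_ofNat]
    _ ≤ |x| ^ 3 + |y| ^ 3 := (abs_add_le _ _).trans_eq (by rw [abs_pow, abs_pow])
    _ ≤ |z| ^ 3 + |z| ^ 3 := by gcongr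
    _ < 9 * |z| ^ 3 := by linarith [pow_pos hz 3]

lemma thirteen_mul_abs_pow_six_le {A B C d : ℤ} (hC : |C| ≤ |A * B|)
    (hd : (3 * (A * B * C)) ^ 2 ≤ 2 * d) : 13 * |C| ^ 6 ≤ |3 * (A * B * C) * d| := by
  have hsq : |C| ^ 2 ≤ |A * B * C| := by
    rw [abs_mul _ C, sq]
    gcongr
  generalize A * B * C = k at *
  have hk : 0 ≤ |k| := abs_nonneg k
  have hd' : 9 * |k| ^ 2 ≤ 2 * |d| := by
    rw [sq_abs]
    linarith [le_abs_self d]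
  have hcube : |C| ^ 6 ≤ |k| ^ 3 := by
    calc |C| ^ 6 = (|C| ^ 2) ^ 3 := by ring
      _ ≤ |k| ^ 3 := by gcongr
  rw [abs_mul, abs_mul, Nat.abs_ofNat]
  nlinarith [mul_le_mul_of_nonneg_left hd' hk, pow_nonneg hk 3]

lemma exists_descent_pow {b : ℕ} (hcop : IsCoprime x y) (hz : z ≠ 0)
    (h : x ^ 3 + y ^ 3 = 9 * z ^ 3) (hb : 3 ^ (b + 1) ∣ z) :
    ∃ A B C : ℤ, IsCoprime A B ∧ C ≠ 0 ∧ A ^ 3 + B ^ 3 = 9 * C ^ 3 ∧ 3 ^ b ∣ C ∧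
      13 * |C| ^ 6 ≤ |z| := by
  obtain ⟨A, B, C, d, hAB, hABC, hd, rfl, hsq⟩ :=
    exists_descent hcop h ((dvd_pow_self 3 b.succ_ne_zero).trans hb)
  simp only [ne_eq, mul_eq_zero, OfNat.ofNat_ne_zero, false_or, not_or] at hz
  obtain ⟨⟨⟨hA, hB⟩, hC⟩, -⟩ := hz
  refine ⟨A, B, C, hAB, hC, hABC, ?_, thirteen_mul_abs_pow_six_le
    (abs_le_abs_mul_of_pow_three_add hA hB hABC) hsq⟩
  have hcop3 : IsCoprime (3 ^ b) (A * B * d) := IsCoprime.pow_left <|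
    (isCoprime_three_of_not_dvd (not_three_dvd_mul_of_pow_three_add hAB hABC)).mul_right
      (isCoprime_three_of_not_dvd hd)
  refine hcop3.dvd_of_dvd_mul_left ((mul_dvd_mul_iff_left (three_ne_zero' ℤ)).1 ?_)
  rwa [← pow_succ', show 3 * (A * B * d * C) = 3 * (A * B * C) * d by ring]

theorem thirteen_pow_le_abs {b : ℕ} (hcop : IsCoprime x y) (hz : z ≠ 0)
    (h : x ^ 3 + y ^ 3 = 9 * z ^ 3) (hb : 3 ^ b ∣ z) : 13 ^ ((6 ^ b - 1) / 5) ≤ |z| := by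
  induction b generalizing x y z with
  | zero => simpa using Int.one_le_abs hz
  | succ b ih =>
    obtain ⟨A, B, C, hAB, hC, hABC, hbC, hCz⟩ := exists_descent_pow hcop hz h hb
    have hexp : (6 ^ (b + 1) - 1) / 5 = 6 * ((6 ^ b - 1) / 5) + 1 := by
      have hmod : 6 ^ b % 5 = 1 := by simp [Nat.pow_mod]
      have hpos : 0 < 6 ^ b := by positivity
      rw [pow_succ]
      omega
    calc (13 : ℤ) ^ ((6 ^ (b + 1) - 1) / 5) = 13 * (13 ^ ((6 ^ b - 1) / 5)) ^ 6 := by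
          rw [hexp, pow_succ', mul_comm 6, pow_mul]
      _ ≤ 13 * |C| ^ 6 := by
        gcongr
        exact ih hAB hC hABC hbC
      _ ≤ |z| := hCz

end Descent

/-! ### Bounding the solutions -/

section Solutions

/-- As in `three_pow_le_abs_of_cubic_form_lt`, variables keep the powers unevaluated. -/
lemma pow_12330_le_three_pow {N K : ℕ} (hN : N = 2691) (hK : K = 23074) :
    (12330 : ℤ) ^ N ≤ 3 ^ K := by
  rw [show N = 47 * 57 + 12 by omega, show K = 13 * 31 * 57 + 103 by omega]
  simp only [pow_add, pow_mul]
  gcongr ?_ ^ 57 * ?_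
  · norm_num
  · norm_num

/-- This is `|y| ^ (6 / 25) ≤ 3 ^ (24 / 25) * |x ^ 3 - 9 * y ^ 3|`, an effective irrationality
measure for `∛9`. Below `3 ^ 23074` the growth hypothesis forces `b ≤ 6` and the convergents of `∛9`
apply; above it the Padé approximants do. -/
lemma pow_six_le_of_growth {b : ℕ} {x y : ℤ} (hform : |x ^ 3 - 9 * y ^ 3| < 3 ^ (9 * b + 6))
    (hgrowth : 13 ^ ((6 ^ b - 1) / 5) ≤ |y|) (hlo : 3 ^ 29 ≤ |y|) :
    y ^ 6 ≤ |x ^ 3 - 9 * y ^ 3| ^ 25 * 3 ^ 24 := by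
  obtain ⟨K, hK⟩ : ∃ K, K = 23074 := ⟨_, rfl⟩
  obtain ⟨N, hN⟩ : ∃ N, N = 2691 := ⟨_, rfl⟩
  have hyK : |y| < 3 ^ K :=
    (abs_lt_pow_of_growth hN.ge hform hgrowth).trans_le (pow_12330_le_three_pow hN hK)
  have hb : b ≤ 6 := by
    by_contra! hb
    have hpow : 6 ^ 7 ≤ 6 ^ b := Nat.pow_le_pow_right (by norm_num) hb
    refine hyK.not_ge (le_trans ?_ hgrowth)
    calc (3 : ℤ) ^ K ≤ 13 ^ K := by gcongr; norm_num
      _ ≤ 13 ^ ((6 ^ b - 1) / 5) := by gcongr <;> omega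
  by_contra! hpow
  refine hyK.not_ge (three_pow_le_abs_of_cubic_form_lt hK hpow (hform.trans_le ?_) hlo)
  gcongr <;> omega

lemma abs_le_max_of_cubic_eq_zero {z₁ z₂ z₃ : ℤ} (h : z₁ ^ 3 + z₂ ^ 3 + 9 * z₃ ^ 3 = 0) :
    |z₂| ≤ max (2 * |z₁|) (3 * |z₃|) := by
  rw [le_max_iff, or_iff_not_imp_right, not_le]
  intro hlt
  have hcube : |z₂| ^ 3 ≤ |z₁| ^ 3 + 9 * |z₃| ^ 3 := by
    calc |z₂| ^ 3 = |z₁ ^ 3 + 9 * z₃ ^ 3| := by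
          rw [← abs_pow, ← abs_neg]
          congr 1
          linarith
      _ ≤ |z₁ ^ 3| + |9 * z₃ ^ 3| := abs_add_le _ _
      _ = |z₁| ^ 3 + 9 * |z₃| ^ 3 := by rw [abs_mul, abs_pow, abs_pow, Nat.abs_ofNat]
  have hz₃ : (3 * |z₃|) ^ 3 ≤ |z₂| ^ 3 := by gcongr
  refine le_of_pow_le_pow_left₀ three_ne_zero (by positivity) ?_
  linarith [pow_nonneg (abs_nonneg z₁) 3]

variable {b : ℕ} {w z₁ z₂ z₃ : ℤ}

lemma isCoprime_of_gcd_eq_one {u v : ℤ} (hgcd : Int.gcd (Int.gcd z₁ z₂) z₃ = 1)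
    (hlin : u * z₁ + v * z₂ + z₃ = 0) : IsCoprime z₁ z₂ := by
  have hdvd : (Int.gcd z₁ z₂ : ℤ) ∣ z₃ := by
    rw [show z₃ = -(u * z₁ + v * z₂) by linarith, dvd_neg]
    exact dvd_add ((Int.gcd_dvd_left ..).mul_left _) ((Int.gcd_dvd_right ..).mul_left _)
  rw [Int.isCoprime_iff_gcd_eq_one]
  rwa [Int.gcd_eq_natAbs_left hdvd, Int.natAbs_natCast] at hgcd

lemma three_pow_dvd_of_linear_eq_zero (hw : 3 ^ (b + 1) ∣ w)
    (hlin : w * z₁ + 3 ^ b * z₂ + z₃ = 0) : 3 ^ b ∣ z₃ := by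
  rw [show z₃ = -(w * z₁ + 3 ^ b * z₂) by linarith, dvd_neg]
  exact dvd_add (((pow_dvd_pow 3 b.le_succ).trans hw).mul_right _) (dvd_mul_right _ _)

/-- Substituting `z₃ ≡ -3 ^ b * z₂ (mod z₁)` into the cubic equation gives
`z₁ ∣ (3 ^ (3 * b + 2) - 1) * z₂ ^ 3`. -/
lemma abs_lt_three_pow (hcop : IsCoprime z₁ z₂) (hcubic : z₁ ^ 3 + z₂ ^ 3 + 9 * z₃ ^ 3 = 0)
    (hlin : w * z₁ + 3 ^ b * z₂ + z₃ = 0) : |z₁| < 3 ^ (3 * b + 2) := by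
  have hdvd_mul : z₁ ∣ (3 ^ (3 * b + 2) - 1) * z₂ ^ 3 := by
    obtain rfl : z₃ = -(w * z₁ + 3 ^ b * z₂) := by linarith
    refine ⟨z₁ ^ 2 - 9 * (w ^ 3 * z₁ ^ 2 + 3 * w ^ 2 * z₁ * (3 ^ b * z₂) +
      3 * w * (3 ^ b * z₂) ^ 2), ?_⟩
    rw [pow_add, mul_comm 3 b, pow_mul]
    linear_combination -hcubic
  have hdvd : |z₁| ∣ 3 ^ (3 * b + 2) - 1 :=
    (abs_dvd _ _).2 (hcop.pow_right.dvd_of_dvd_mul_right hdvd_mul)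
  have hpos : (1 : ℤ) < 3 ^ (3 * b + 2) := one_lt_pow₀ (by norm_num) (by omega)
  linarith [Int.le_of_dvd (by linarith) hdvd]

lemma sq_lt_three_pow (hcop : IsCoprime z₁ z₂) (hz₃ : z₃ ≠ 0) (hdvd : 3 ^ b ∣ z₃)
    (hz₁ : |z₁| < 3 ^ (3 * b + 2)) (hcubic : z₁ ^ 3 + z₂ ^ 3 + 9 * z₃ ^ 3 = 0) :
    z₃ ^ 2 < 3 ^ (75 * b + 58) := by
  rcases lt_or_ge |z₃| (3 ^ 29) with hlt | hge
  · calc z₃ ^ 2 = |z₃| ^ 2 := (sq_abs _).symm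
      _ < (3 ^ 29) ^ 2 := by gcongr
      _ ≤ 3 ^ (75 * b + 58) := by
        rw [← pow_mul]
        gcongr <;> omega
  have hgrowth : 13 ^ ((6 ^ b - 1) / 5) ≤ |(-z₃)| :=
    thirteen_pow_le_abs hcop (neg_ne_zero.2 hz₃) (by linarith) ((dvd_neg).2 hdvd)
  have hform_eq : |z₂ ^ 3 - 9 * (-z₃) ^ 3| = |z₁| ^ 3 := by
    rw [← abs_pow, ← abs_neg]
    congr 1
    linarith
  have hform : |z₁| ^ 3 < 3 ^ (9 * b + 6) := by
    calc |z₁| ^ 3 < (3 ^ (3 * b + 2)) ^ 3 := by gcongr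
      _ = 3 ^ (9 * b + 6) := by ring
  have hsix := pow_six_le_of_growth (hform_eq ▸ hform) hgrowth (by rwa [abs_neg])
  rw [hform_eq] at hsix
  refine lt_of_pow_lt_pow_left₀ 3 (by positivity) ?_
  calc (z₃ ^ 2) ^ 3 = (-z₃) ^ 6 := by ring
    _ ≤ (|z₁| ^ 3) ^ 25 * 3 ^ 24 := hsix
    _ < (3 ^ (9 * b + 6)) ^ 25 * 3 ^ 24 := by gcongr
    _ = (3 ^ (75 * b + 58)) ^ 3 := by ring

lemma max_sq_lt_three_pow (hz₁ : |z₁| < 3 ^ (3 * b + 2)) (hz₃ : z₃ ^ 2 < 3 ^ (75 * b + 58))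
    (hcubic : z₁ ^ 3 + z₂ ^ 3 + 9 * z₃ ^ 3 = 0) :
    max |z₂| (3 * |z₃|) ^ 2 < 3 ^ (75 * b + 60) := by
  have hthree : (3 * |z₃|) ^ 2 < 3 ^ (75 * b + 60) := by
    rw [mul_pow, sq_abs, pow_add _ _ 60]
    rw [pow_add] at hz₃
    linarith
  have htwo : (2 * |z₁|) ^ 2 < 3 ^ (75 * b + 60) := by
    calc (2 * |z₁|) ^ 2 ≤ (3 * |z₁|) ^ 2 := by gcongr; norm_num
      _ < (3 * 3 ^ (3 * b + 2)) ^ 2 := by gcongr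
      _ ≤ 3 ^ (75 * b + 60) := by
        rw [← pow_succ', ← pow_mul]
        exact pow_le_pow_right₀ (by norm_num) (by omega)
  have hmax : max |z₂| (3 * |z₃|) ≤ max (2 * |z₁|) (3 * |z₃|) :=
    max_le (abs_le_max_of_cubic_eq_zero hcubic) (le_max_right _ _)
  refine (pow_le_pow_left₀ (by positivity) hmax 2).trans_lt ?_
  rcases max_choice (2 * |z₁|) (3 * |z₃|) with h | h <;> rwa [h]

end Solutions

/-- **Inequality (`eq:upper bound 2`) in the proof of Theorem `thm:new system`:** if
`3^{b+1} ∣ w` and nonzero coprime integers `z₁, z₂, z₃` satisfy `z₁³ + z₂³ + 9z₃³ = 0` and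
`wz₁ + 3^b z₂ + z₃ = 0`, then `max(|z₂|, 3|z₃|) < 3^{37.5·b + 30}` as real numbers. -/
theorem upper_bound_of_solution
    (b : ℕ) (w z₁ z₂ z₃ : ℤ) (hw : (3 : ℤ) ^ (b + 1) ∣ w)
    (hz₁ : z₁ ≠ 0) (hz₂ : z₂ ≠ 0) (hz₃ : z₃ ≠ 0)
    (hgcd : Int.gcd (Int.gcd z₁ z₂) z₃ = 1)
    (e₁ : z₁ ^ 3 + z₂ ^ 3 + 9 * z₃ ^ 3 = 0)
    (e₂ : w * z₁ + 3 ^ b * z₂ + z₃ = 0) :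
    max (|(z₂ : ℝ)|) (3 * |(z₃ : ℝ)|) < (3 : ℝ) ^ ((37.5 : ℝ) * (b : ℝ) + 30) := by
  have hcop : IsCoprime z₁ z₂ := isCoprime_of_gcd_eq_one hgcd e₂
  have hz₁_lt : |z₁| < 3 ^ (3 * b + 2) := abs_lt_three_pow hcop e₁ e₂
  have hz₃_lt : z₃ ^ 2 < 3 ^ (75 * b + 58) :=
    sq_lt_three_pow hcop hz₃ (three_pow_dvd_of_linear_eq_zero hw e₂) hz₁_lt e₁
  have hmax : max |z₂| (3 * |z₃|) ^ 2 < 3 ^ (75 * b + 60) := max_sq_lt_three_pow hz₁_lt hz₃_lt e₁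
  have hsq : ((3 : ℝ) ^ ((37.5 : ℝ) * (b : ℝ) + 30)) ^ 2 = 3 ^ (75 * b + 60) := by
    rw [← Real.rpow_mul_natCast (by norm_num), ← Real.rpow_natCast]
    congr 1
    push_cast
    ring
  refine lt_of_pow_lt_pow_left₀ 2 (by positivity) ?_
  rw [hsq]
  exact_mod_cast hmax
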